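/- Assume d ≥ 3, 2 < p < 2_s^⋆, and fix ε > 0. Let g_ε be (s,γ)-admissible for some s > d/(d+1) and γ > 1. Let H^s_G denote the set of u ∈ H^s(ℝ^d) such that, writing x = (x', x_d) ∈ ℝ^{d−1} × ℝ, u(Ax', x_d) = u(x', x_d) for all A ∈ O(d−1). Then the infimum inf{q_ε(u)/‖u‖_{L^p}² : 0 ≠ u ∈ H^s_G} is attained at some nonzero u ∈ H^s_G. -/

import Mathlib

open MeasureTheory Real Filter
open scoped ENNReal FourierTransform RealInnerProductSpace Topology

noncomputable section

/-- Euclidean space `ℝ^d`. -/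
abbrev Rd (d : ℕ) : Type := EuclideanSpace ℝ (Fin d)

/-- `U` is the (distributional, hence `L²`-) Fourier transform of `u`:
it pairs against Schwartz functions the way the Fourier transform of `u` must. -/
def IsFT {d : ℕ} (U u : Rd d → ℂ) : Prop :=
  ∀ φ : SchwartzMap (Rd d) ℂ, ∫ ξ, U ξ * φ ξ = ∫ x, u x * 𝓕 (⇑φ) x

/-- An element of `H^s(ℝ^d)`: an `L²` function `toFun` together with its Fourier
transform `ft`, satisfying the `H^s` integrability condition. -/
structure HsFn (d : ℕ) (s : ℝ) where
  toFun : Rd d → ℂ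
  ft : Rd d → ℂ
  memL2 : MemLp toFun 2 volume
  ft_memL2 : MemLp ft 2 volume
  isFT : IsFT ft toFun
  memHs : Integrable (fun ξ : Rd d => ‖ft ξ‖ ^ 2 * (1 + ‖ξ‖ ^ 2) ^ s) volume

/-- The quadratic form `q_ε(u) = ∫ |û(ξ)|² g(|ξ|) dξ` (for a fixed symbol `g`). -/
def qeps {d : ℕ} {s : ℝ} (g : ℝ → ℝ) (u : HsFn d s) : ℝ :=
  ∫ ξ : Rd d, ‖u.ft ξ‖ ^ 2 * g ‖ξ‖

/-- The `L^p` norm (as a real number). -/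
def LpN {d : ℕ} (p : ℝ) (f : Rd d → ℂ) : ℝ :=
  (eLpNorm f (ENNReal.ofReal p) volume).toReal

/-- The set of values of the Rayleigh quotient `q_ε(u)/‖u‖_p²` over nonzero
`u ∈ H^s` satisfying the symmetry constraint `P`. -/
def RayleighSet (d : ℕ) (s p : ℝ) (g : ℝ → ℝ) (P : (Rd d → ℂ) → Prop) : Set ℝ :=
  {t | ∃ u : HsFn d s, P u.toFun ∧ ¬ u.toFun =ᵐ[volume] (fun _ => (0 : ℂ)) ∧
      MemLp u.toFun (ENNReal.ofReal p) volume ∧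
      t = qeps g u / LpN p u.toFun ^ 2}

/-- The Rayleigh quotient infimum. -/
def Rayleigh (d : ℕ) (s p : ℝ) (g : ℝ → ℝ) (P : (Rd d → ℂ) → Prop) : ℝ :=
  sInf (RayleighSet d s p g P)

/-- The Rayleigh quotient infimum is attained. -/
def Attained (d : ℕ) (s p : ℝ) (g : ℝ → ℝ) (P : (Rd d → ℂ) → Prop) : Prop :=
  ∃ u : HsFn d s, P u.toFun ∧ ¬ u.toFun =ᵐ[volume] (fun _ => (0 : ℂ)) ∧
      MemLp u.toFun (ENNReal.ofReal p) volume ∧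
      qeps g u / LpN p u.toFun ^ 2 = Rayleigh d s p g P

/-- A radial function. -/
def Radial {d : ℕ} (f : Rd d → ℂ) : Prop := ∀ x y : Rd d, ‖x‖ = ‖y‖ → f x = f y

/-- The squared norm of the first block of coordinates (the first `d - k` ones),
under the identification `ℝ^d = ℝ^{d-k} × ℝ^k`. -/
def blockSq (d k : ℕ) (x : Rd d) : ℝ := ∑ i : Fin d, if (i : ℕ) < d - k then x i ^ 2 else 0

/-- A `G_k = O(d-k) × O(k)`-symmetric function: it depends only on the norms of the
two blocks of coordinates. -/
def GkSymmetric (d k : ℕ) (f : Rd d → ℂ) : Prop :=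
  ∀ x y : Rd d, blockSq d k x = blockSq d k y → ‖x‖ = ‖y‖ → f x = f y

/-- An `(s,γ)`-admissible family of symbols, with admissibility constants `c, C`. -/
def IsAdmissible (s γ c C : ℝ) (g : ℝ → ℝ → ℝ) : Prop :=
  (∀ ε ∈ Set.Ioo (0:ℝ) 1, Measurable (g ε)) ∧
  (∀ ε ∈ Set.Ioo (0:ℝ) 1, ∀ r : ℝ, 0 < g ε r) ∧
  (∀ ε ∈ Set.Ioo (0:ℝ) 1, ∀ r : ℝ, 1/2 ≤ |r - 1| →
      c * (1 + |r| ^ (2*s)) ≤ g ε r ∧ g ε r ≤ C * (1 + |r| ^ (2*s))) ∧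
  (∀ ε ∈ Set.Ioo (0:ℝ) 1, ∀ r : ℝ, |r - 1| ≤ 1/2 →
      c * (ε + |r - 1| ^ γ) ≤ g ε r ∧ g ε r ≤ C * (ε + |r - 1| ^ γ))

/-- The `G_k`-symmetric Stein–Tomas exponent `2_⋆^k`. -/
def twoStarK (d k : ℕ) : ℝ :=
  2 * ((d : ℝ) + (min k (d - k) : ℕ)) / ((d : ℝ) - 2 + (min k (d - k) : ℕ))

/-- The interpolation parameter `α_k`. -/
def alphaK (d k : ℕ) (p : ℝ) : ℝ := (1/2 - 1/p) / (1/2 - 1/twoStarK d k)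

/-- The spherical shell `A_{ε,δ}` around the unit sphere (with `I_{ε,δ}` scale `ε^{1/γ}`). -/
def Aset (d : ℕ) (γ ε δ : ℝ) : Set (Rd d) :=
  {ξ | δ * ε ^ (1/γ) ≤ |‖ξ‖ - 1| ∧ |‖ξ‖ - 1| ≤ δ⁻¹ * ε ^ (1/γ)}

/-- A `G = O(d-1) × {1}`-symmetric function (writing `x = (x', x_d) ∈ ℝ^{d-1} × ℝ`):
it depends only on `(|x'|, x_d)`. -/
def GSymmetric (d : ℕ) (f : Rd d → ℂ) : Prop :=
  ∀ x y : Rd d, blockSq d 1 x = blockSq d 1 y →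
    (∀ i : Fin d, (i : ℕ) = d - 1 → x i = y i) → f x = f y

instance fact_one_le_two' : Fact ((1:ℝ≥0∞) ≤ 2) := ⟨by norm_num⟩

lemma memLp_fourier_schwartz {d : ℕ} (φ : SchwartzMap (Rd d) ℂ) : MemLp (𝓕 (⇑φ)) 2 := by
  have h : MemLp (⇑(𝓕 φ : SchwartzMap (Rd d) ℂ)) 2 :=
    (𝓕 φ : SchwartzMap (Rd d) ℂ).memLp 2 volume
  rwa [SchwartzMap.fourier_coe] at h

lemma isFT_sub {d : ℕ} {V v V' v' : Rd d → ℂ} (hV : MemLp V 2) (hv : MemLp v 2)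
    (hV' : MemLp V' 2) (hv' : MemLp v' 2) (h : IsFT V v) (h' : IsFT V' v') :
    IsFT (V - V') (v - v') := by
  intro φ
  have e1 : Integrable (fun ξ => V ξ * φ ξ) := hV.integrable_mul (φ.memLp 2 volume)
  have e2 : Integrable (fun ξ => V' ξ * φ ξ) := hV'.integrable_mul (φ.memLp 2 volume)
  have e3 : Integrable (fun ξ => v ξ * 𝓕 (⇑φ) ξ) := hv.integrable_mul (memLp_fourier_schwartz φ)
  have e4 : Integrable (fun ξ => v' ξ * 𝓕 (⇑φ) ξ) := hv'.integrable_mul (memLp_fourier_schwartz φ)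
  simp only [Pi.sub_apply, sub_mul]
  rw [integral_sub e1 e2, integral_sub e3 e4, h φ, h' φ]

lemma isFT_smul {d : ℕ} {V v : Rd d → ℂ} (a : ℂ) (h : IsFT V v) :
    IsFT (fun ξ => a * V ξ) (fun x => a * v x) := by
  intro φ
  simp only [mul_assoc]
  rw [integral_const_mul, integral_const_mul, h φ]

lemma isFT_exists {d : ℕ} {V : Rd d → ℂ} (hV : MemLp V 2) :
    ∃ v : Rd d → ℂ, MemLp v 2 ∧ IsFT V v ∧ eLpNorm v 2 volume = eLpNorm V 2 volume := by
  set F : Lp ℂ 2 (volume : Measure (Rd d)) := MemLp.toLp V hV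
  set f : Lp ℂ 2 (volume : Measure (Rd d)) := 𝓕⁻ F with hf
  refine ⟨f, Lp.memLp f, ?_, ?_⟩
  · intro φ
    have h1 := Lp.fourier_toTemperedDistribution_eq f
    have h2 : 𝓕 f = F := by rw [hf]; exact FourierTransform.fourier_fourierInv_eq F
    rw [h2] at h1
    have h3 := congrArg (fun T => T φ) h1
    simp only [TemperedDistribution.fourier_apply, Lp.toTemperedDistribution_apply] at h3
    have h4 : ∫ ξ, V ξ * φ ξ = ∫ ξ, φ ξ • F ξ := by
      apply integral_congr_ae
      filter_upwards [hV.coeFn_toLp] with x hx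
      rw [hx, smul_eq_mul, mul_comm]
    rw [h4, ← h3]
    apply integral_congr_ae
    filter_upwards with x
    rw [smul_eq_mul, mul_comm]; rfl
  · have h2 : 𝓕 f = F := by rw [hf]; exact FourierTransform.fourier_fourierInv_eq F
    have h3 : ‖F‖ = ‖f‖ := by rw [← h2]; exact Lp.norm_fourier_eq f
    rw [Lp.norm_def, Lp.norm_def, ENNReal.toReal_eq_toReal_iff' (Lp.eLpNorm_ne_top _)
      (Lp.eLpNorm_ne_top _)] at h3
    rw [← h3]
    exact eLpNorm_congr_ae hV.coeFn_toLp

lemma isFT_unique {d : ℕ} {V v v' : Rd d → ℂ} (hv : LocallyIntegrable v)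
    (hv' : LocallyIntegrable v')
    (h : IsFT V v) (h' : IsFT V v') : v =ᵐ[volume] v' := by
  apply ae_eq_of_integral_contDiff_smul_eq hv hv'
  intro g hg hgs
  have hgs' : HasCompactSupport (fun x => (g x : ℂ)) := hgs.comp_left (g := fun t : ℝ => (t:ℂ)) (by simp)
  have hg' : ContDiff ℝ (⊤ : ℕ∞) (fun x => (g x : ℂ)) :=
    Complex.ofRealCLM.contDiff.comp hg
  set G : SchwartzMap (Rd d) ℂ := hgs'.toSchwartzMap hg'
  have h1 := (h (𝓕⁻ G)).symm.trans (h' (𝓕⁻ G))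
  have h2 : 𝓕 (⇑(𝓕⁻ G : SchwartzMap (Rd d) ℂ)) = ⇑G := by
    rw [← SchwartzMap.fourier_coe, FourierTransform.fourier_fourierInv_eq]
  rw [h2] at h1
  have h3 : ∀ x, G x = (g x : ℂ) := fun x => rfl
  simp only [h3] at h1
  simp only [Complex.real_smul]
  simpa [mul_comm] using h1

lemma isFT_fourierInv {d : ℕ} {V : Rd d → ℂ} (hV : Integrable V) : IsFT V (𝓕⁻ V) := by
  intro φ
  have h2 : 𝓕⁻ (⇑(𝓕 φ : SchwartzMap (Rd d) ℂ)) = ⇑φ := by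
    rw [← SchwartzMap.fourierInv_coe, FourierTransform.fourierInv_fourier_eq]
  have h1 := VectorFourier.integral_fourierIntegral_smul_eq_flip (L := -innerₗ (Rd d)) (μ := volume)
      (ν := volume) (f := V) (g := ⇑(𝓕 φ : SchwartzMap (Rd d) ℂ))
      Real.continuous_fourierChar (by simpa using (continuous_inner (𝕜 := ℝ) (E := Rd d)).fun_neg) hV (𝓕 φ : SchwartzMap (Rd d) ℂ).integrable
  have h4 : (-innerₗ (Rd d)).flip = -innerₗ (Rd d) := by
    ext x y; simp [real_inner_comm]
  rw [h4] at h1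
  have h5 : ∀ f : Rd d → ℂ, VectorFourier.fourierIntegral 𝐞 volume (-innerₗ (Rd d)) f = 𝓕⁻ f := by
    intro f; rfl
  rw [h5, h5, h2] at h1
  simp only [smul_eq_mul] at h1
  rw [← h1]; rfl

lemma memLp_two_locInt {d : ℕ} {v : Rd d → ℂ} (hv : MemLp v 2) : LocallyIntegrable v :=
  hv.locallyIntegrable (by norm_num)

lemma plancherel {d : ℕ} {V v : Rd d → ℂ} (hV : MemLp V 2) (hv : MemLp v 2) (h : IsFT V v) :
    eLpNorm v 2 volume = eLpNorm V 2 volume := by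
  obtain ⟨w, hw, hw2, hw3⟩ := isFT_exists hV
  rw [← hw3]
  exact eLpNorm_congr_ae (isFT_unique (memLp_two_locInt hv) (memLp_two_locInt hw) h hw2)

lemma continuous_fourierInv {d : ℕ} {V : Rd d → ℂ} (hV : Integrable V) : Continuous (𝓕⁻ V) := by
  have := VectorFourier.fourierIntegral_continuous (L := -innerₗ (Rd d)) (μ := volume)
    Real.continuous_fourierChar (by simpa using (continuous_inner (𝕜 := ℝ) (E := Rd d)).fun_neg) hV
  exact this

lemma fourierInv_ae {d : ℕ} {V v : Rd d → ℂ} (hV : Integrable V) (hv : MemLp v 2)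
    (h : IsFT V v) : v =ᵐ[volume] 𝓕⁻ V :=
  isFT_unique (memLp_two_locInt hv) (continuous_fourierInv hV).locallyIntegrable h
    (isFT_fourierInv hV)

lemma memLp_fourierInv {d : ℕ} {V : Rd d → ℂ} (hV : Integrable V) (hV2 : MemLp V 2) :
    MemLp (𝓕⁻ V) 2 := by
  obtain ⟨w, hw, hw2, hw3⟩ := isFT_exists hV2
  exact (memLp_congr_ae (fourierInv_ae hV hw hw2)).1 hw

lemma norm_fourierInv_le {d : ℕ} (V : Rd d → ℂ) (x : Rd d) : ‖𝓕⁻ V x‖ ≤ ∫ ξ, ‖V ξ‖ := by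
  rw [Real.fourierInv_eq]
  refine (norm_integral_le_integral_norm _).trans (le_of_eq ?_)
  simp

lemma eLpNorm_interp {d : ℕ} {p : ℝ} (hp : 2 < p) {v : Rd d → ℂ} {B : ℝ≥0∞} (hBt : B ≠ ⊤)
    (hB : ∀ᵐ x, ‖v x‖ₑ ≤ B) :
    eLpNorm v (ENNReal.ofReal p) volume ≤ B ^ (1 - 2/p) * (eLpNorm v 2 volume) ^ (2/p) := by
  have hp0 : 0 < p := by linarith
  rw [eLpNorm_eq_lintegral_rpow_enorm_toReal (by simpa using hp0) (by simp),
    eLpNorm_eq_lintegral_rpow_enorm_toReal (by simp) (by simp), ENNReal.toReal_ofReal hp0.le]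
  have h1 : ∫⁻ x, ‖v x‖ₑ ^ p ≤ B ^ (p - 2) * ∫⁻ x, ‖v x‖ₑ ^ (2:ℝ) := by
    calc ∫⁻ x, ‖v x‖ₑ ^ p ≤ ∫⁻ x, B ^ (p-2) * ‖v x‖ₑ ^ (2:ℝ) := by
          apply lintegral_mono_ae
          filter_upwards [hB] with x hx
          calc ‖v x‖ₑ ^ p = ‖v x‖ₑ ^ ((p-2) + 2) := by ring_nf
            _ = ‖v x‖ₑ ^ (p-2) * ‖v x‖ₑ ^ (2:ℝ) := by
                rw [ENNReal.rpow_add_of_nonneg _ _ (by linarith) (by norm_num)]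
            _ ≤ _ := by gcongr
      _ ≤ _ := by
          rw [lintegral_const_mul' _ _ (ENNReal.rpow_ne_top_of_nonneg (by linarith) hBt)]
  calc (∫⁻ x, ‖v x‖ₑ ^ p) ^ (1/p) ≤ (B ^ (p - 2) * ∫⁻ x, ‖v x‖ₑ ^ (2:ℝ)) ^ (1/p) := by gcongr
    _ = _ := by
      rw [ENNReal.mul_rpow_of_nonneg _ _ (by positivity), ← ENNReal.rpow_mul]
      congr 1
      · congr 1; field_simp
      · simp only [ENNReal.toReal_ofNat]
        rw [← ENNReal.rpow_mul]; congr 1; field_simp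

lemma eLpNorm_one_le_of_support {d : ℕ} {V : Rd d → ℂ} (hV : MemLp V 2) {S : Set (Rd d)}
    (hS : MeasurableSet S) (hVS : ∀ ξ, ξ ∉ S → V ξ = 0) :
    eLpNorm V 1 volume ≤ eLpNorm V 2 volume * (volume S) ^ (1/2 : ℝ) := by
  have h0 : S.indicator V = V := by
    rw [Set.indicator_eq_self]
    intro x hx
    by_contra h
    exact hx (hVS x h)
  have h1 : ∀ q : ℝ≥0∞, eLpNorm V q volume = eLpNorm V q (volume.restrict S) := by
    intro q
    rw [← eLpNorm_indicator_eq_eLpNorm_restrict hS, h0]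
  rw [h1 1, h1 2]
  have := eLpNorm_le_eLpNorm_mul_rpow_measure_univ (μ := volume.restrict S) (f := V) (p := 1) (q := 2)
    (by norm_num) hV.1.restrict
  refine this.trans (le_of_eq ?_)
  simp
  norm_num

lemma integrable_of_support {d : ℕ} {V : Rd d → ℂ} (hV : MemLp V 2) {S : Set (Rd d)}
    (hS : MeasurableSet S) (hSf : volume S ≠ ⊤) (hVS : ∀ ξ, ξ ∉ S → V ξ = 0) : Integrable V := by
  rw [← memLp_one_iff_integrable]
  refine ⟨hV.1, (eLpNorm_one_le_of_support hV hS hVS).trans_lt ?_⟩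
  exact ENNReal.mul_lt_top hV.2 (ENNReal.rpow_lt_top_of_nonneg (by norm_num) hSf)

lemma enorm_fourierInv_le {d : ℕ} (V : Rd d → ℂ) (x : Rd d) :
    ‖𝓕⁻ V x‖ₑ ≤ eLpNorm V 1 volume := by
  rw [Real.fourierInv_eq, eLpNorm_one_eq_lintegral_enorm]
  refine (enorm_integral_le_lintegral_enorm _).trans (le_of_eq ?_)
  congr with ξ
  rw [← ofReal_norm, ← ofReal_norm]
  simp

lemma bernstein_set {d : ℕ} {p : ℝ} (hp : 2 < p) {V v : Rd d → ℂ} (hV : MemLp V 2)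
    (hv : MemLp v 2) (h : IsFT V v) {S : Set (Rd d)}
    (hS : MeasurableSet S) (hSf : volume S ≠ ⊤) (hVS : ∀ ξ, ξ ∉ S → V ξ = 0) :
    eLpNorm v (ENNReal.ofReal p) volume ≤ (volume S) ^ (1/2 - 1/p) * eLpNorm V 2 volume := by
  have hp0 : 0 < p := by linarith
  have hi := integrable_of_support hV hS hSf hVS
  set N := eLpNorm V 2 volume with hN
  have hNt : N ≠ ⊤ := hV.2.ne
  have hb : ∀ᵐ x, ‖v x‖ₑ ≤ N * (volume S) ^ (1/2 : ℝ) := by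
    filter_upwards [fourierInv_ae hi hv h] with x hx
    rw [hx]
    exact (enorm_fourierInv_le V x).trans (eLpNorm_one_le_of_support hV hS hVS)
  have hq : 0 < 1 - 2/p := by
    rw [sub_pos, div_lt_one hp0]; exact hp
  have := eLpNorm_interp hp (ENNReal.mul_ne_top hNt
    (ENNReal.rpow_ne_top_of_nonneg (by norm_num) hSf)) hb
  refine this.trans (le_of_eq ?_)
  rw [plancherel hV hv h, ← hN, ENNReal.mul_rpow_of_nonneg _ _ hq.le, ← ENNReal.rpow_mul]
  have e1 : (1/2 : ℝ) * (1 - 2/p) = 1/2 - 1/p := by field_simp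
  rw [e1, mul_comm (N ^ _), mul_assoc, ← ENNReal.rpow_add_of_nonneg _ _ hq.le (by positivity)]
  simp

/-- Weighted `L²` norm. -/
def wN {d : ℕ} (σ : ℝ) (V : Rd d → ℂ) : ℝ≥0∞ :=
  eLpNorm (fun ξ => (((1 + ‖ξ‖^2) ^ (σ/2) : ℝ) : ℂ) * V ξ) 2 volume

lemma eLpNorm_le_wN {d : ℕ} {σ : ℝ} {V T : Rd d → ℂ} {b : ℝ}
    (h : ∀ ξ, ‖T ξ‖ ≤ b * ((1 + ‖ξ‖^2) ^ (σ/2) * ‖V ξ‖)) :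
    eLpNorm T 2 volume ≤ ENNReal.ofReal b * wN σ V := by
  unfold wN
  apply eLpNorm_le_mul_eLpNorm_of_ae_le_mul
  filter_upwards with ξ
  refine (h ξ).trans (le_of_eq ?_)
  rw [norm_mul, Complex.norm_real, Real.norm_of_nonneg (by positivity)]

lemma bernstein_ball {d : ℕ} {p : ℝ} (hp : 2 < p) :
    ∃ K : ℝ≥0∞, K ≠ ⊤ ∧ ∀ (R : ℝ), 0 < R → ∀ (V v : Rd d → ℂ), MemLp V 2 →
    MemLp v 2 → IsFT V v → (∀ ξ, R ≤ ‖ξ‖ → V ξ = 0) →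
    eLpNorm v (ENNReal.ofReal p) volume ≤
      K * ENNReal.ofReal (R ^ (d * (1/2 - 1/p))) * eLpNorm V 2 volume := by
  have hp0 : 0 < p := by linarith
  have ha : 0 ≤ 1/2 - 1/p := by
    rw [sub_nonneg]; exact one_div_le_one_div_of_le (by norm_num) hp.le
  refine ⟨(volume (Metric.ball (0 : Rd d) 1)) ^ (1/2 - 1/p),
    ENNReal.rpow_ne_top_of_nonneg ha measure_ball_lt_top.ne, ?_⟩
  intro R hR V v hV hv h hs
  have := bernstein_set hp hV hv h (S := Metric.ball 0 R) measurableSet_ball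
    measure_ball_lt_top.ne (by intro ξ hξ; apply hs; simpa using hξ)
  refine this.trans (le_of_eq ?_)
  rw [Measure.addHaar_ball_of_pos _ _ hR, ENNReal.mul_rpow_of_nonneg _ _ ha,
    mul_comm (ENNReal.ofReal _ ^ (1/2 - 1/p))]
  congr 2
  rw [ENNReal.ofReal_rpow_of_nonneg (by positivity) ha]
  congr 1
  simp only [finrank_euclideanSpace, Fintype.card_fin]
  rw [← Real.rpow_natCast, ← Real.rpow_mul hR.le]
lemma wgt_ge {d : ℕ} {σ : ℝ} (hσ : 0 ≤ σ) {r : ℝ} (hr : 0 ≤ r) {ξ : Rd d} (h : r ≤ ‖ξ‖) :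
    r ^ σ ≤ (1 + ‖ξ‖^2) ^ (σ/2) := by
  calc r ^ σ = (r^2) ^ (σ/2) := by
        rw [← Real.rpow_natCast, ← Real.rpow_mul hr]; congr 1; push_cast; ring
    _ ≤ _ := by
        apply Real.rpow_le_rpow (by positivity) _ (by positivity)
        nlinarith [norm_nonneg ξ]

lemma wgt_ge_one {d : ℕ} {σ : ℝ} (hσ : 0 ≤ σ) (ξ : Rd d) :
    1 ≤ (1 + ‖ξ‖^2) ^ (σ/2) :=
  Real.one_le_rpow (by nlinarith [norm_nonneg ξ]) (by positivity)

/-- Dyadic truncation. -/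
def trunc {d : ℕ} (J : ℕ) (V : Rd d → ℂ) : Rd d → ℂ :=
  (Metric.ball (0 : Rd d) (2^J)).indicator V

lemma trunc_memLp {d : ℕ} (J : ℕ) {V : Rd d → ℂ} (hV : MemLp V 2) : MemLp (trunc J V) 2 :=
  hV.indicator measurableSet_ball

lemma trunc_zero_of {d : ℕ} {J : ℕ} {V : Rd d → ℂ} {ξ : Rd d} (h : 2^J ≤ ‖ξ‖) :
    trunc J V ξ = 0 := by
  unfold trunc
  rw [Set.indicator_of_notMem]
  simpa using h

lemma trunc_eq_of {d : ℕ} {J : ℕ} {V : Rd d → ℂ} {ξ : Rd d} (h : ‖ξ‖ < 2^J) :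
    trunc J V ξ = V ξ := by
  unfold trunc
  rw [Set.indicator_of_mem]
  simpa using h

lemma trunc_integrable {d : ℕ} (J : ℕ) {V : Rd d → ℂ} (hV : MemLp V 2) :
    Integrable (trunc J V) :=
  integrable_of_support (trunc_memLp J hV) (S := Metric.ball 0 (2^J)) measurableSet_ball
    measure_ball_lt_top.ne (fun _ hξ => Set.indicator_of_notMem hξ _)

lemma sobolev {d : ℕ} {p σ : ℝ} (hp : 2 < p) (hσ : d * (1/2 - 1/p) < σ) :
    ∃ K : ℝ≥0∞, K ≠ ⊤ ∧ ∀ (V v : Rd d → ℂ), MemLp V 2 → MemLp v 2 → IsFT V v →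
      eLpNorm v (ENNReal.ofReal p) volume ≤ K * wN σ V := by
  obtain ⟨K0, hK0, hK⟩ := bernstein_ball (d := d) hp
  have ha : 0 ≤ 1/2 - 1/p := by
    rw [sub_nonneg]; exact one_div_le_one_div_of_le (by norm_num) hp.le
  set e := d * (1/2 - 1/p) with he
  have he0 : 0 ≤ e := by positivity
  have hσ0 : 0 < σ := lt_of_le_of_lt he0 hσ
  have hp1 : (1:ℝ≥0∞) ≤ ENNReal.ofReal p := by
    rw [ENNReal.one_le_ofReal]; linarith
  set θ : ℝ := 2 ^ (e - σ) with hθ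
  have hθ0 : 0 < θ := by positivity
  have hθ1 : θ < 1 := Real.rpow_lt_one_of_one_lt_of_neg (by norm_num) (by linarith)
  set A : ℝ := 1 + 2^σ * (1 - θ)⁻¹ with hA
  have hA1 : 1 ≤ A := by
    have : 0 < 1 - θ := by linarith
    have : 0 < 2^σ * (1 - θ)⁻¹ := by positivity
    linarith
  refine ⟨(K0 + 1) * ENNReal.ofReal A, by finiteness, ?_⟩
  intro V v hV hv h
  set N := wN σ V with hN
  by_cases hNt : N = ⊤
  · rw [hNt, ENNReal.mul_top]
    · exact le_top
    · apply mul_ne_zero (by simp)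
      simp; linarith
  -- truncated functions
  set w : ℕ → Rd d → ℂ := fun J => 𝓕⁻ (trunc J V) with hw
  have hwm : ∀ J, MemLp (w J) 2 := fun J =>
    memLp_fourierInv (trunc_integrable J hV) (trunc_memLp J hV)
  have hwF : ∀ J, IsFT (trunc J V) (w J) := fun J => isFT_fourierInv (trunc_integrable J hV)
  have hbase : eLpNorm (w 0) (ENNReal.ofReal p) volume ≤ K0 * N := by
    have := hK 1 one_pos (trunc 0 V) (w 0) (trunc_memLp 0 hV) (hwm 0) (hwF 0)
      (fun ξ hξ => trunc_zero_of (by simpa using hξ))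
    refine this.trans ?_
    rw [Real.one_rpow, ENNReal.ofReal_one, mul_one]
    gcongr
    have := eLpNorm_le_wN (σ := σ) (V := V) (T := trunc 0 V) (b := 1) (by
      intro ξ
      rw [one_mul]
      calc ‖trunc 0 V ξ‖ ≤ ‖V ξ‖ := norm_indicator_le_norm_self _ _
        _ ≤ _ := le_mul_of_one_le_left (norm_nonneg _) (wgt_ge_one hσ0.le ξ))
    simpa using this
  have hstep : ∀ J, eLpNorm (w (J+1) - w J) (ENNReal.ofReal p) volume ≤
      K0 * ENNReal.ofReal (2^σ * θ^(J+1)) * N := by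
    intro J
    have := hK (2^(J+1)) (by positivity) (trunc (J+1) V - trunc J V) (w (J+1) - w J)
      ((trunc_memLp _ hV).sub (trunc_memLp _ hV)) ((hwm _).sub (hwm _))
      (isFT_sub (trunc_memLp _ hV) (hwm _) (trunc_memLp _ hV) (hwm _) (hwF _) (hwF _))
      (fun ξ hξ => by
        rw [Pi.sub_apply, trunc_zero_of hξ, trunc_zero_of, sub_zero]
        refine le_trans ?_ hξ
        exact pow_le_pow_right₀ (by norm_num) (by omega))
    refine this.trans ?_
    have h2 := eLpNorm_le_wN (σ := σ) (V := V) (T := trunc (J+1) V - trunc J V)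
      (b := ((2^J : ℝ)^σ)⁻¹) (by
      intro ξ
      rw [Pi.sub_apply]
      have hpos : (0:ℝ) < (2^J : ℝ)^σ := by positivity
      rw [← div_eq_inv_mul, le_div_iff₀ hpos]
      rcases lt_or_ge ‖ξ‖ (2^J) with h1 | h1
      · rw [trunc_eq_of h1, trunc_eq_of (h1.trans (pow_lt_pow_right₀ (by norm_num) (by omega)))]
        rw [sub_self, norm_zero, zero_mul]; positivity
      · rw [trunc_zero_of h1, sub_zero, mul_comm]
        gcongr
        · exact wgt_ge hσ0.le (by positivity) h1
        · exact norm_indicator_le_norm_self _ _)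
    calc _ ≤ K0 * ENNReal.ofReal ((2 ^ (J + 1)) ^ e) * (ENNReal.ofReal ((2^J : ℝ)^σ)⁻¹ * N) := by
          gcongr
      _ = _ := by
          rw [← mul_assoc, mul_assoc K0, ← ENNReal.ofReal_mul (by positivity)]
          congr 3
          rw [hθ, ← Real.rpow_natCast, ← Real.rpow_natCast, ← Real.rpow_natCast,
            ← Real.rpow_mul (by norm_num), ← Real.rpow_mul (by norm_num),
            ← Real.rpow_mul (by norm_num), ← Real.rpow_neg (by norm_num),
            ← Real.rpow_add (by norm_num), ← Real.rpow_add (by norm_num)]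
          congr 1
          push_cast; ring
  have hsum : ∀ J, eLpNorm (w J) (ENNReal.ofReal p) volume ≤
      K0 * ENNReal.ofReal (1 + 2^σ * ∑ j ∈ Finset.range (J+1), θ^j) * N := by
    intro J
    induction J with
    | zero =>
      refine hbase.trans ?_
      gcongr
      apply le_mul_of_one_le_right (by simp)
      rw [ENNReal.one_le_ofReal]
      have : (0:ℝ) ≤ 2^σ * ∑ j ∈ Finset.range (0+1), θ^j := by positivity
      linarith
    | succ J ih =>
      have e1 : w (J+1) = (w (J+1) - w J) + w J := by simp
      rw [e1]
      refine (eLpNorm_add_le ((hwm _).1.sub (hwm _).1) (hwm _).1 hp1).trans ?_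
      refine (add_le_add (hstep J) ih).trans (le_of_eq ?_)
      rw [← add_mul, ← mul_add, ← ENNReal.ofReal_add (by positivity) (by positivity)]
      congr 3
      rw [Finset.sum_range_succ _ (J+1)]; ring
  have hbd : ∀ J, eLpNorm (w J) (ENNReal.ofReal p) volume ≤ (K0+1) * ENNReal.ofReal A * N := by
    intro J
    refine (hsum J).trans ?_
    gcongr
    · simp
    · rw [hA]
      gcongr
      rw [← tsum_geometric_of_lt_one hθ0.le hθ1]
      exact (summable_geometric_of_lt_one hθ0.le hθ1).sum_le_tsum _ (fun i _ => by positivity)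
  -- L² convergence
  have hconv : Tendsto (fun J => eLpNorm (w J - v) 2 volume) atTop (𝓝 0) := by
    have hb : ∀ J, eLpNorm (w J - v) 2 volume ≤ ENNReal.ofReal (((2:ℝ)^σ)⁻¹^J) * N := by
      intro J
      rw [plancherel ((trunc_memLp J hV).sub hV) ((hwm J).sub hv)
        (isFT_sub (trunc_memLp J hV) (hwm J) hV hv (hwF J) h)]
      apply eLpNorm_le_wN
      intro ξ
      rw [Pi.sub_apply, inv_pow]
      have e2 : ((2:ℝ)^σ)^J = (2^J : ℝ)^σ := by
        rw [← Real.rpow_natCast, ← Real.rpow_natCast, ← Real.rpow_mul (by norm_num),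
          ← Real.rpow_mul (by norm_num), mul_comm]
      rw [e2]
      have hpos : (0:ℝ) < (2^J : ℝ)^σ := by positivity
      rw [← div_eq_inv_mul, le_div_iff₀ hpos]
      rcases lt_or_ge ‖ξ‖ (2^J) with h1 | h1
      · rw [trunc_eq_of h1, sub_self, norm_zero, zero_mul]; positivity
      · rw [trunc_zero_of h1, zero_sub, norm_neg, mul_comm]
        gcongr
        exact wgt_ge hσ0.le (by positivity) h1
    refine tendsto_of_tendsto_of_tendsto_of_le_of_le tendsto_const_nhds ?_ (fun _ => bot_le) hb
    have h3 : Tendsto (fun J : ℕ => (((2:ℝ)^σ)⁻¹^J)) atTop (𝓝 0) := by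
      apply tendsto_pow_atTop_nhds_zero_of_lt_one (by positivity)
      apply inv_lt_one_of_one_lt₀
      exact Real.one_lt_rpow (by norm_num) hσ0
    have h4 := ENNReal.Tendsto.mul_const (b := N) (ENNReal.tendsto_ofReal h3) (Or.inr hNt)
    simpa using h4
  have hmeas := tendstoInMeasure_of_tendsto_eLpNorm (p := 2) (by norm_num) (fun J => (hwm J).1)
    hv.1 hconv
  obtain ⟨ns, _, hns⟩ := hmeas.exists_seq_tendsto_ae
  refine (Lp.eLpNorm_lim_le_liminf_eLpNorm (fun n => (hwm (ns n)).1) v hns).trans ?_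
  refine (liminf_le_liminf (Eventually.of_forall fun n => hbd (ns n))).trans ?_
  simp

lemma L2_cauchy {d : ℕ} {a b : Rd d → ℂ} (ha : MemLp a 2) (hb : MemLp b 2) :
    ‖∫ x, a x * b x‖ ≤ (eLpNorm a 2 volume).toReal * (eLpNorm b 2 volume).toReal := by
  rw [← ENNReal.toReal_mul]
  have h1 : eLpNorm (fun x => a x * b x) 1 volume ≤ eLpNorm a 2 volume * eLpNorm b 2 volume := by
    have := eLpNorm_smul_le_mul_eLpNorm (p := 2) (q := 2) (r := 1) hb.1 ha.1
    simpa [smul_eq_mul] using! this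
  have hi : Integrable (fun x => a x * b x) := ha.integrable_mul hb
  calc ‖∫ x, a x * b x‖ ≤ ∫ x, ‖a x * b x‖ := norm_integral_le_integral_norm _
    _ = (eLpNorm (fun x => a x * b x) 1 volume).toReal := by
        rw [eLpNorm_one_eq_lintegral_enorm, integral_norm_eq_lintegral_enorm hi.1]
    _ ≤ _ := ENNReal.toReal_mono (ENNReal.mul_ne_top ha.2.ne hb.2.ne) h1

lemma L2_normsq {d : ℕ} {a : Rd d → ℂ} (ha : MemLp a 2) :
    (eLpNorm a 2 volume).toReal ^ 2 = ∫ x, ‖a x‖ ^ 2 := by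
  have h := ha.eLpNorm_eq_integral_rpow_norm (by norm_num) (by norm_num)
  rw [h, ENNReal.toReal_ofReal (by positivity)]
  simp only [ENNReal.toReal_ofNat]
  rw [← Real.rpow_natCast, ← Real.rpow_mul (by positivity)]
  simp

lemma L2_integrable_sq {d : ℕ} {a : Rd d → ℂ} (ha : MemLp a 2) :
    Integrable (fun x => ‖a x‖ ^ 2) := by
  have := (memLp_two_iff_integrable_sq_norm ha.1).1 ha
  exact this

lemma weak_compact {d : ℕ} (f : ℕ → Rd d → ℂ) (hf : ∀ n, MemLp (f n) 2) (M : ℝ)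
    (hM : ∀ n, (eLpNorm (f n) 2 volume).toReal ≤ M) :
    ∃ (F : Rd d → ℂ) (φ : ℕ → ℕ), MemLp F 2 ∧ StrictMono φ ∧
      ∀ h : Rd d → ℂ, MemLp h 2 → Tendsto (fun n => ∫ x, f (φ n) x * h x) atTop
        (𝓝 (∫ x, F x * h x)) := by
  set H := Lp ℂ 2 (volume : Measure (Rd d))
  have hsep : TopologicalSpace.SeparableSpace H := by
    haveI : Fact ((2:ℝ≥0∞) ≠ ⊤) := ⟨by norm_num⟩
    infer_instance
  set D := InnerProductSpace.toDual ℂ H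
  set x : ℕ → WeakDual ℂ H := fun n => StrongDual.toWeakDual (D ((hf n).toLp (f n)))
  have hc := WeakDual.isSeqCompact_closedBall ℂ H 0 M
  obtain ⟨L, -, φ, hφ, hlim⟩ := hc (x := x) (by
    intro n
    simp only [Set.mem_preimage, mem_closedBall_zero_iff]
    change ‖D ((hf n).toLp (f n))‖ ≤ M
    rw [LinearIsometryEquiv.norm_map, Lp.norm_toLp]
    exact hM n)
  set F : H := D.symm (WeakDual.toStrongDual L) with hF
  refine ⟨F, φ, Lp.memLp F, hφ, ?_⟩
  intro h hh
  have hhc : MemLp (fun x => (starRingEnd ℂ) (h x)) 2 volume := hh.star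
  have h1 : Tendsto (fun n => (x (φ n)) (hhc.toLp _)) atTop (𝓝 (L (hhc.toLp _))) :=
    ((WeakBilin.tendsto_iff_forall_eval_tendsto _ (fun a b hab => by
      ext z; exact DFunLike.congr_fun hab z)).1 hlim) _
  have h2 : ∀ (g : H), inner ℂ g (hhc.toLp _) = (starRingEnd ℂ) (∫ x, g x * h x) := by
    intro g
    rw [L2.inner_def, ← integral_conj]
    apply integral_congr_ae
    filter_upwards [hhc.coeFn_toLp] with y hy
    rw [hy]
    simp [mul_comm]
  have h3 : ∀ n, (x (φ n)) (hhc.toLp _) = (starRingEnd ℂ) (∫ y, f (φ n) y * h y) := by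
    intro n
    change (D ((hf (φ n)).toLp (f (φ n)))) (hhc.toLp _) = _
    rw [InnerProductSpace.toDual_apply_apply, h2]
    congr 1
    apply integral_congr_ae
    filter_upwards [(hf (φ n)).coeFn_toLp] with y hy
    rw [hy]
  have h4 : L (hhc.toLp _) = (starRingEnd ℂ) (∫ y, F y * h y) := by
    rw [← h2, ← InnerProductSpace.toDual_apply_apply]
    change _ = (D F) _
    rw [hF, LinearIsometryEquiv.apply_symm_apply]
    rfl
  rw [h4] at h1
  simp only [h3] at h1
  have := (Complex.continuous_conj.tendsto _).comp h1
  simpa [Function.comp_def] using this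

/-- Radial smooth cutoff. -/
def chiR {d : ℕ} (R : ℝ) (ξ : Rd d) : ℝ := Real.smoothTransition (2 - ‖ξ‖^2 / R^2)

lemma chiR_nonneg {d : ℕ} (R : ℝ) (ξ : Rd d) : 0 ≤ chiR R ξ := Real.smoothTransition.nonneg _
lemma chiR_le_one {d : ℕ} (R : ℝ) (ξ : Rd d) : chiR R ξ ≤ 1 := Real.smoothTransition.le_one _

lemma chiR_eq_one {d : ℕ} {R : ℝ} (hR : 0 < R) {ξ : Rd d} (h : ‖ξ‖ ≤ R) : chiR R ξ = 1 := by
  apply Real.smoothTransition.one_of_one_le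
  have : ‖ξ‖^2 / R^2 ≤ 1 := by
    rw [div_le_one (by positivity)]
    gcongr
  linarith

lemma chiR_eq_zero {d : ℕ} {R : ℝ} (hR : 0 < R) {ξ : Rd d} (h : 2 * R ≤ ‖ξ‖) : chiR R ξ = 0 := by
  apply Real.smoothTransition.zero_of_nonpos
  have : 2 ≤ ‖ξ‖^2 / R^2 := by
    rw [le_div_iff₀ (by positivity)]
    nlinarith
  linarith

lemma chiR_contDiff {d : ℕ} (R : ℝ) : ContDiff ℝ (⊤ : ℕ∞) (chiR (d := d) R) := by
  unfold chiR
  apply Real.smoothTransition.contDiff.comp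
  apply contDiff_const.sub
  exact (contDiff_norm_sq ℝ).div_const _

lemma chiRC_compact {d : ℕ} {R : ℝ} (hR : 0 < R) :
    HasCompactSupport (fun ξ : Rd d => (chiR R ξ : ℂ)) := by
  apply HasCompactSupport.intro (isCompact_closedBall (0 : Rd d) (2*R))
  intro ξ hξ
  rw [chiR_eq_zero hR]; · simp
  simp at hξ
  exact hξ.le

/-- Cutoff as a Schwartz function. -/
def chiS {d : ℕ} {R : ℝ} (hR : 0 < R) : SchwartzMap (Rd d) ℂ :=
  (chiRC_compact hR).toSchwartzMap (Complex.ofRealCLM.contDiff.comp (chiR_contDiff R))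

lemma chiS_apply {d : ℕ} {R : ℝ} (hR : 0 < R) (ξ : Rd d) : chiS hR ξ = (chiR R ξ : ℂ) := rfl

lemma modulate {d : ℕ} (φ : SchwartzMap (Rd d) ℂ) (t : Rd d) :
    ∃ ψ : SchwartzMap (Rd d) ℂ, (∀ ξ, ψ ξ = ((𝐞 ⟪ξ, t⟫ : Circle) : ℂ) * φ ξ) ∧
      ∀ y, 𝓕 (⇑ψ) y = 𝓕 (⇑φ) (y - t) := by
  set G : SchwartzMap (Rd d) ℂ := (𝓕 φ : SchwartzMap (Rd d) ℂ).compSubConstCLM ℂ t with hG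
  have hGa : ∀ y, G y = 𝓕 (⇑φ) (y - t) := by
    intro y
    rw [hG, SchwartzMap.compSubConstCLM_apply, SchwartzMap.fourier_coe]
  refine ⟨𝓕⁻ G, ?_, ?_⟩
  · intro ξ
    have h2 : 𝓕⁻ (𝓕 (⇑φ)) ξ = φ ξ := by
      rw [← SchwartzMap.fourier_coe, ← SchwartzMap.fourierInv_coe,
        FourierTransform.fourierInv_fourier_eq]
    rw [← h2, SchwartzMap.fourierInv_coe, Real.fourierInv_eq, Real.fourierInv_eq]
    rw [← integral_add_right_eq_self _ t, ← integral_const_mul]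
    congr with y
    rw [hGa, add_sub_cancel_right, inner_add_left, AddChar.map_add_eq_mul, Circle.smul_def,
      Circle.smul_def, Circle.coe_mul, smul_eq_mul, smul_eq_mul, real_inner_comm t ξ]
    ring
  · intro y
    rw [← SchwartzMap.fourier_coe, FourierTransform.fourier_fourierInv_eq, hGa]

lemma isFT_translate {d : ℕ} {U u : Rd d → ℂ} (h : IsFT U u) (t : Rd d) :
    IsFT (fun ξ => ((𝐞 ⟪ξ, t⟫ : Circle) : ℂ) * U ξ) (fun x => u (x + t)) := by
  intro φ
  obtain ⟨ψ, h1, h2⟩ := modulate φ t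
  have := h ψ
  simp only [h1, h2] at this
  have h3 : ∫ x, u (x + t) * 𝓕 (⇑φ) x = ∫ y, u y * 𝓕 (⇑φ) (y - t) := by
    rw [← integral_add_right_eq_self (fun y => u y * 𝓕 (⇑φ) (y - t)) t]
    simp only [add_sub_cancel_right]
  rw [h3, ← this]
  congr with ξ
  ring

/-- Low-pass filter. -/
def Plow {d : ℕ} (R : ℝ) (U : Rd d → ℂ) : Rd d → ℂ := 𝓕⁻ (fun ξ => (chiR R ξ : ℂ) * U ξ)

lemma Plow_apply {d : ℕ} (R : ℝ) (U : Rd d → ℂ) (x : Rd d) :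
    Plow R U x = ∫ ξ, U ξ * (((𝐞 ⟪ξ, x⟫ : Circle) : ℂ) * (chiR R ξ : ℂ)) := by
  unfold Plow
  rw [Real.fourierInv_eq]
  congr with ξ
  rw [Circle.smul_def, smul_eq_mul]; ring

lemma Plow_conv {d : ℕ} {R : ℝ} (hR : 0 < R) {U u : Rd d → ℂ} (h : IsFT U u) (x : Rd d) :
    Plow R U x = ∫ y, u y * 𝓕 (⇑(chiS (d := d) hR)) (y - x) := by
  obtain ⟨ψ, h1, h2⟩ := modulate (chiS (d := d) hR) x
  have := h ψ
  simp only [h1, h2] at this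
  rw [← this, Plow_apply]
  rfl

lemma Plow_comp_isometry {d : ℕ} {R : ℝ} (hR : 0 < R) {U u : Rd d → ℂ} (h : IsFT U u)
    (A : Rd d ≃ₗᵢ[ℝ] Rd d) (hA : ∀ y, u (A y) = u y) (x : Rd d) :
    Plow R U (A x) = Plow R U x := by
  rw [Plow_conv hR h, Plow_conv hR h]
  rw [← MeasurePreserving.integral_comp A.measurePreserving A.toHomeomorph.measurableEmbedding]
  congr with y
  rw [hA, ← map_sub, ← Real.fourier_comp_linearIsometry]
  have : (⇑(chiS (d := d) hR)) ∘ A = ⇑(chiS (d := d) hR) := by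
    ext z
    simp [chiS_apply, chiR]
  rw [this]

lemma blockSq_eq {d : ℕ} (hd : 0 < d) (x : Rd d) :
    blockSq d 1 x = ‖x‖^2 - x ⟨d-1, by omega⟩ ^ 2 := by
  rw [EuclideanSpace.norm_sq_eq]
  unfold blockSq
  have h1 : ∀ i : Fin d, ‖x i‖^2 = (if (i:ℕ) < d - 1 then x i ^2 else 0) +
      (if i = ⟨d-1, by omega⟩ then x i ^ 2 else 0) := by
    intro i
    by_cases hi : (i:ℕ) < d - 1
    · have : i ≠ ⟨d-1, by omega⟩ := by intro h; rw [h] at hi; simp at hi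
      simp [hi, this]
    · have : i = ⟨d-1, by omega⟩ := by ext; simp; omega
      simp [this]
  simp_rw [h1]
  rw [Finset.sum_add_distrib]
  simp

lemma gsymm_iff {d : ℕ} (hd : 0 < d) (f : Rd d → ℂ) :
    GSymmetric d f ↔ ∀ x y : Rd d, ‖x‖ = ‖y‖ → x ⟨d-1, by omega⟩ = y ⟨d-1, by omega⟩ → f x = f y := by
  constructor
  · intro h x y h1 h2
    apply h x y
    · rw [blockSq_eq hd, blockSq_eq hd, h1, h2]
    · intro i hi
      have : i = ⟨d-1, by omega⟩ := by ext; simpa using hi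
      rw [this, h2]
  · intro h x y h1 h2
    have h3 := h2 ⟨d-1, by omega⟩ rfl
    rw [blockSq_eq hd, blockSq_eq hd, h3] at h1
    apply h x y _ h3
    have : ‖x‖^2 = ‖y‖^2 := by linarith
    exact (pow_left_inj₀ (norm_nonneg _) (norm_nonneg _) (by norm_num)).1 this

lemma Plow_gsymm {d : ℕ} (hd : 0 < d) {R : ℝ} (hR : 0 < R) {U u : Rd d → ℂ} (h : IsFT U u)
    (hu : GSymmetric d u) : GSymmetric d (Plow R U) := by
  rw [gsymm_iff hd] at hu ⊢
  intro x y hxy hl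
  set A : Rd d ≃ₗᵢ[ℝ] Rd d := Submodule.reflection (ℝ ∙ (x - y))ᗮ
  have hA : A x = y := Submodule.reflection_sub hxy
  rw [← hA, Plow_comp_isometry hR h]
  intro z
  apply hu
  · simp
  · set e : Rd d := EuclideanSpace.single ⟨d-1, by omega⟩ (1:ℝ)
    have he : ∀ w : Rd d, w ⟨d-1, by omega⟩ = ⟪e, w⟫ := by
      intro w; rw [EuclideanSpace.inner_single_left]; simp
    have hAe : A e = e := by
      apply Submodule.reflection_mem_subspace_eq_self
      rw [Submodule.mem_orthogonal_singleton_iff_inner_right]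
      rw [real_inner_comm, ← he]; simp [hl]
    rw [he, he, ← hAe, A.inner_map_map, hAe]

/-- `r (cos θ e₀ + sin θ e₁) + t e_{d-1}` -/
def circPt {d : ℕ} (hd : 3 ≤ d) (r θ t : ℝ) : Rd d :=
  EuclideanSpace.single ⟨0, by omega⟩ (r * Real.cos θ) +
    EuclideanSpace.single ⟨1, by omega⟩ (r * Real.sin θ) +
    EuclideanSpace.single ⟨d-1, by omega⟩ t

lemma circPt_last {d : ℕ} (hd : 3 ≤ d) (r θ t : ℝ) :
    circPt hd r θ t ⟨d-1, by omega⟩ = t := by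
  have h0 : d - 1 ≠ 0 := by omega
  have h1 : d - 1 ≠ 1 := by omega
  simp [circPt, EuclideanSpace.single_apply, h0, h1]

lemma circPt_zero {d : ℕ} (hd : 3 ≤ d) (r θ t : ℝ) :
    circPt hd r θ t ⟨0, by omega⟩ = r * Real.cos θ := by
  have h0 : ¬ (0 = d - 1) := by omega
  simp [circPt, EuclideanSpace.single_apply, h0]

lemma circPt_norm {d : ℕ} (hd : 3 ≤ d) (r θ t : ℝ) :
    ‖circPt hd r θ t‖^2 = r^2 + t^2 := by
  have h0 : ¬ (0 = d - 1) := by omega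
  have h1 : ¬ (1 = d - 1) := by omega
  have h0' : ¬ (d - 1 = 0) := by omega
  have h1' : ¬ (d - 1 = 1) := by omega
  unfold circPt
  rw [norm_add_sq_real, norm_add_sq_real]
  simp only [inner_add_left, EuclideanSpace.inner_single_left, EuclideanSpace.single_apply,
    EuclideanSpace.norm_single]
  simp [h0, h1, h0', h1', mul_pow, sq_abs]
  nlinarith [Real.sin_sq_add_cos_sq θ]

lemma circPt_sub {d : ℕ} (hd : 3 ≤ d) (r θ θ' t : ℝ) :
    circPt hd r θ t - circPt hd r θ' t = r • (circPt hd 1 θ 0 - circPt hd 1 θ' 0) := by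
  ext i
  simp [circPt, EuclideanSpace.single_apply]
  split_ifs <;> ring

lemma Plow_circ {d : ℕ} (hd : 3 ≤ d) {R : ℝ} (hR : 0 < R) {U u : Rd d → ℂ} (h : IsFT U u)
    (hu : GSymmetric d u) (x : Rd d) (θ : ℝ) :
    Plow R U x = Plow R U (circPt hd (√(blockSq d 1 x)) θ (x ⟨d-1, by omega⟩)) := by
  have h1 := Plow_gsymm (by omega) hR h hu
  rw [gsymm_iff (by omega)] at h1
  apply h1
  · rw [← pow_left_inj₀ (norm_nonneg _) (norm_nonneg _) (two_ne_zero), circPt_norm,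
      Real.sq_sqrt, blockSq_eq (by omega)]
    · ring
    · unfold blockSq
      apply Finset.sum_nonneg
      intro i _; split_ifs <;> positivity
  · rw [circPt_last]

/-- modulated cutoff -/
def hmod {d : ℕ} (R : ℝ) (y ξ : Rd d) : ℂ := ((𝐞 ⟪ξ, y⟫ : Circle) : ℂ) * (chiR R ξ : ℂ)

lemma hmod_memLp {d : ℕ} {R : ℝ} (hR : 0 < R) (y : Rd d) : MemLp (hmod R y) 2 := by
  obtain ⟨ψ, h1, -⟩ := modulate (chiS (d := d) hR) y
  have : hmod R y = ⇑ψ := by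
    ext ξ; rw [h1]; rfl
  rw [this]
  exact ψ.memLp 2 volume

lemma chiR_sq_integrable {d : ℕ} {R : ℝ} (hR : 0 < R) :
    Integrable (fun ξ : Rd d => ((chiR R ξ : ℂ)^2)) := by
  have h := (chiS (d := d) hR).memLp 2 volume
  have := h.integrable_mul h
  refine this.congr ?_
  filter_upwards with ξ
  simp [chiS_apply, sq]

/-- kernel -/
def kern {d : ℕ} (R : ℝ) (z : Rd d) : ℂ := ∫ ξ, 𝐞 (-⟪ξ, z⟫) • ((chiR R ξ : ℂ)^2)

lemma conj_hmod_mul {d : ℕ} (R : ℝ) (y z ξ : Rd d) :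
    (starRingEnd ℂ) (hmod R y ξ) * hmod R z ξ = 𝐞 (-⟪ξ, y - z⟫) • ((chiR R ξ : ℂ)^2) := by
  unfold hmod
  rw [inner_sub_right, neg_sub, sub_eq_add_neg, AddChar.map_add_eq_mul, AddChar.map_neg_eq_inv,
    Circle.smul_def, Circle.coe_mul, Circle.coe_inv_eq_conj, map_mul, Complex.conj_ofReal,
    smul_eq_mul]
  ring

lemma Plow_eq_hmod {d : ℕ} (R : ℝ) (U : Rd d → ℂ) (x : Rd d) :
    Plow R U x = ∫ ξ, U ξ * hmod R x ξ := Plow_apply R U x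

lemma sum_hmod_sq {d : ℕ} {R : ℝ} (hR : 0 < R) {N : ℕ} (y : Fin N → Rd d) :
    ∫ ξ, ‖∑ i, hmod R (y i) ξ‖^2 ≤ ∑ i, ∑ j, ‖kern R (y i - y j)‖ := by
  have h1 : ((∫ ξ, ‖∑ i, hmod R (y i) ξ‖^2 : ℝ) : ℂ) = ∑ i, ∑ j, kern R (y i - y j) := by
    rw [← integral_complex_ofReal]
    have h2 : ∀ ξ, ((‖∑ i, hmod R (y i) ξ‖^2 : ℝ) : ℂ) =
        ∑ i, ∑ j, 𝐞 (-⟪ξ, y i - y j⟫) • ((chiR R ξ : ℂ)^2) := by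
      intro ξ
      push_cast
      rw [← Complex.conj_mul', map_sum, Finset.sum_mul_sum]
      simp_rw [conj_hmod_mul]
    simp_rw [h2]
    have hIntg : ∀ z : Rd d, Integrable (fun ξ => 𝐞 (-⟪ξ, z⟫) • ((chiR R ξ : ℂ)^2)) := by
      intro z
      have := (Real.fourierIntegral_convergent_iff (μ := volume) (f := fun ξ : Rd d => ((chiR R ξ : ℂ)^2)) z).2 (chiR_sq_integrable hR)
      exact this
    rw [integral_finsetSum _ (fun i _ => integrable_finsetSum _ (fun j _ => hIntg _))]
    refine Finset.sum_congr rfl (fun i _ => ?_)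
    rw [integral_finsetSum _ (fun j _ => hIntg _)]
    rfl
  have h3 : 0 ≤ ∫ ξ, ‖∑ i, hmod R (y i) ξ‖^2 := by positivity
  calc _ = ‖((∫ ξ, ‖∑ i, hmod R (y i) ξ‖^2 : ℝ) : ℂ)‖ := by
        rw [Complex.norm_real, Real.norm_of_nonneg h3]
    _ ≤ _ := by
        rw [h1]
        refine (norm_sum_le _ _).trans ?_
        gcongr
        exact norm_sum_le _ _

lemma decay {d : ℕ} (hd : 3 ≤ d) {R : ℝ} (hR : 0 < R) {η : ℝ} (hη : 0 < η) :
    ∃ r0 : ℝ, ∀ U u : Rd d → ℂ, MemLp U 2 → IsFT U u → GSymmetric d u →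
      ∀ x, r0 ≤ √(blockSq d 1 x) → ‖Plow R U x‖ ≤ η * (eLpNorm U 2 volume).toReal := by
  set K0 := ‖kern R (0 : Rd d)‖ with hK0
  obtain ⟨N, hN⟩ := exists_nat_gt ((K0 + 1) / η^2)
  have hK0' : 0 ≤ K0 := norm_nonneg _
  have hNpos : (0:ℝ) < N := lt_of_le_of_lt (by positivity) hN
  have hNN : (K0 + 1) ≤ η^2 * N := by
    rw [div_lt_iff₀ (by positivity)] at hN
    linarith
  set θ : Fin N → ℝ := fun i => (i:ℝ) / N
  have hz : ∀ i j : Fin N, i ≠ j → circPt hd 1 (θ i) 0 - circPt hd 1 (θ j) 0 ≠ 0 := by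
    intro i j hij h0
    have h1 : circPt hd 1 (θ i) 0 = circPt hd 1 (θ j) 0 := sub_eq_zero.1 h0
    have h2 := congrArg (fun v : Rd d => v ⟨0, by omega⟩) h1
    simp only [circPt_zero, one_mul] at h2
    have hmem : ∀ i : Fin N, θ i ∈ Set.Icc 0 π := by
      intro i
      refine ⟨by positivity, ?_⟩
      have : θ i ≤ 1 := by
        simp only [θ]
        rw [div_le_one hNpos]
        exact_mod_cast i.2.le
      linarith [Real.pi_gt_three]
    have h3 := Real.injOn_cos (hmem i) (hmem j) h2
    simp only [θ] at h3
    have h4 : (i:ℝ) = j := by field_simp at h3; exact h3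
    apply hij
    ext
    exact_mod_cast h4
  have hk : Tendsto (kern (d := d) R) (cocompact (Rd d)) (𝓝 0) :=
    tendsto_integral_exp_inner_smul_cocompact (fun ξ : Rd d => ((chiR R ξ : ℂ)^2))
  have hev : ∀ᶠ r : ℝ in atTop, ∀ i j : Fin N, i ≠ j →
      ‖kern R (r • (circPt hd 1 (θ i) 0 - circPt hd 1 (θ j) 0))‖ ≤ 1 / N := by
    rw [eventually_all]; intro i
    rw [eventually_all]; intro j
    by_cases hij : i = j
    · simp [hij]
    set w := circPt hd 1 (θ i) 0 - circPt hd 1 (θ j) 0 with hw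
    have hw0 := hz i j hij
    have h1 : Tendsto (fun r : ℝ => r • w) atTop (cocompact (Rd d)) := by
      rw [← Metric.cobounded_eq_cocompact, ← tendsto_norm_atTop_iff_cobounded]
      have : Tendsto (fun r : ℝ => |r| * ‖w‖) atTop atTop :=
        tendsto_abs_atTop_atTop.atTop_mul_const (norm_pos_iff.2 hw0)
      simpa [norm_smul] using this
    have h2 := (hk.comp h1).norm
    simp only [norm_zero] at h2
    filter_upwards [h2.eventually_lt_const (show (0:ℝ) < 1 / N by positivity)] with r hr _
    exact hr.le
  obtain ⟨r0, hr0⟩ := eventually_atTop.1 hev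
  refine ⟨r0, ?_⟩
  intro U u hU h hu x hx
  set r := √(blockSq d 1 x)
  set t := x ⟨d-1, by omega⟩
  set y : Fin N → Rd d := fun i => circPt hd r (θ i) t
  have hPy : ∀ i, Plow R U x = Plow R U (y i) := fun i => Plow_circ hd hR h hu x (θ i)
  set S : Rd d → ℂ := fun ξ => ∑ i, hmod R (y i) ξ
  have hS : MemLp S 2 := memLp_finsetSum _ (fun i _ => hmod_memLp hR (y i))
  have h1 : (N:ℂ) * Plow R U x = ∫ ξ, U ξ * S ξ := by
    have e1 : (N:ℂ) * Plow R U x = ∑ i : Fin N, Plow R U (y i) := by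
      rw [Finset.sum_congr rfl (fun i _ => (hPy i).symm)]; simp
    rw [e1]
    simp only [S, Finset.mul_sum]
    have hIntg : ∀ i, Integrable (fun ξ => U ξ * hmod R (y i) ξ) :=
      fun i => hU.integrable_mul (hmod_memLp hR (y i))
    rw [integral_finsetSum _ (fun i _ => hIntg i)]
    simp_rw [Plow_eq_hmod]
  have h2 : (eLpNorm S 2 volume).toReal^2 ≤ (η * N)^2 := by
    rw [L2_normsq hS]
    refine (sum_hmod_sq hR y).trans ?_
    have h3 : ∀ i j, ‖kern R (y i - y j)‖ ≤ (if i = j then K0 else 0) + 1 / N := by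
      intro i j
      by_cases hij : i = j
      · simp [hij, hK0]
      · simp only [hij, if_false, zero_add, y]
        rw [circPt_sub]
        exact hr0 r hx i j hij
    calc ∑ i, ∑ j, ‖kern R (y i - y j)‖ ≤ ∑ i : Fin N, ∑ j : Fin N, ((if i = j then K0 else 0) + 1 / N) := by
          gcongr with i _ j _
          exact h3 i j
      _ = N * (K0 + 1) := by
          simp [Finset.sum_add_distrib]
          field_simp
      _ ≤ (η * N)^2 := by nlinarith
  have h4 : (eLpNorm S 2 volume).toReal ≤ η * N :=
    (pow_le_pow_iff_left₀ (by positivity) (by positivity) two_ne_zero).1 h2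
  have h5 := L2_cauchy hU hS
  rw [← h1, norm_mul, Complex.norm_natCast] at h5
  have h6 : 0 ≤ (eLpNorm U 2 volume).toReal := by positivity
  have h7 : (N:ℝ) * ‖Plow R U x‖ ≤ N * (η * (eLpNorm U 2 volume).toReal) := by
    refine h5.trans ?_
    nlinarith
  exact le_of_mul_le_mul_left h7 hNpos

lemma norm_chiR {d : ℕ} (R : ℝ) (ξ : Rd d) : ‖(chiR R ξ : ℂ)‖ = chiR R ξ := by
  rw [Complex.norm_real, Real.norm_of_nonneg (chiR_nonneg R ξ)]

lemma chiU_memLp {d : ℕ} {R : ℝ} {U : Rd d → ℂ} (hU : MemLp U 2) :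
    MemLp (fun ξ => (chiR R ξ : ℂ) * U ξ) 2 := by
  refine hU.of_le ?_ ?_
  · exact (Complex.continuous_ofReal.comp (chiR_contDiff R).continuous).aestronglyMeasurable.mul hU.1
  · filter_upwards with ξ
    rw [norm_mul, norm_chiR]
    exact mul_le_of_le_one_left (norm_nonneg _) (chiR_le_one R ξ)

lemma chiU_integrable {d : ℕ} {R : ℝ} (hR : 0 < R) {U : Rd d → ℂ} (hU : MemLp U 2) :
    Integrable (fun ξ => (chiR R ξ : ℂ) * U ξ) := by
  refine integrable_of_support (chiU_memLp hU) (S := Metric.ball 0 (2*R)) measurableSet_ball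
    measure_ball_lt_top.ne (fun ξ hξ => ?_)
  rw [chiR_eq_zero hR (by simpa using hξ)]; simp

lemma Plow_memLp {d : ℕ} {R : ℝ} (hR : 0 < R) {U : Rd d → ℂ} (hU : MemLp U 2) :
    MemLp (Plow R U) 2 := memLp_fourierInv (chiU_integrable hR hU) (chiU_memLp hU)

lemma Plow_isFT {d : ℕ} {R : ℝ} (hR : 0 < R) {U : Rd d → ℂ} (hU : MemLp U 2) :
    IsFT (fun ξ => (chiR R ξ : ℂ) * U ξ) (Plow R U) := isFT_fourierInv (chiU_integrable hR hU)

lemma Plow_norm_le {d : ℕ} {R : ℝ} (hR : 0 < R) {U : Rd d → ℂ} (hU : MemLp U 2) :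
    eLpNorm (Plow R U) 2 volume ≤ eLpNorm U 2 volume := by
  rw [plancherel (chiU_memLp hU) (Plow_memLp hR hU) (Plow_isFT hR hU)]
  apply eLpNorm_mono
  intro ξ
  rw [norm_mul, norm_chiR]
  exact mul_le_of_le_one_left (norm_nonneg _) (chiR_le_one R ξ)

lemma tail_wN {d : ℕ} {R σ s : ℝ} (hR : 0 < R) (hσ : σ ≤ s) (U : Rd d → ℂ) :
    wN σ (U - fun ξ => (chiR R ξ : ℂ) * U ξ) ≤ ENNReal.ofReal (R ^ (-(s - σ))) * wN s U := by
  apply eLpNorm_le_wN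
  intro ξ
  have e : (U - fun ξ => (chiR R ξ : ℂ) * U ξ) ξ = ((1 - chiR R ξ : ℝ) : ℂ) * U ξ := by
    simp only [Pi.sub_apply]; push_cast; ring
  rw [e, norm_mul, norm_mul, Complex.norm_real, Complex.norm_real, Real.norm_of_nonneg (by positivity),
    Real.norm_of_nonneg (by linarith [chiR_le_one R ξ])]
  by_cases h : ‖ξ‖ ≤ R
  · rw [chiR_eq_one hR h]; simp; positivity
  · push Not at h
    have h1 := wgt_ge (d := d) (σ := s - σ) (by linarith) hR.le h.le
    have h2 : (1 + ‖ξ‖^2) ^ (s/2) = (1 + ‖ξ‖^2) ^ (σ/2) * (1 + ‖ξ‖^2) ^ ((s-σ)/2) := by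
      rw [← Real.rpow_add (by positivity)]; congr 1; ring
    rw [h2, Real.rpow_neg hR.le]
    have h3 : 1 ≤ (R ^ (s-σ))⁻¹ * (1 + ‖ξ‖^2) ^ ((s-σ)/2) := by
      rw [inv_mul_eq_div, one_le_div (by positivity)]; exact h1
    calc (1 + ‖ξ‖^2) ^ (σ/2) * ((1 - chiR R ξ) * ‖U ξ‖) ≤ (1 + ‖ξ‖^2) ^ (σ/2) * (1 * ‖U ξ‖) := by
          gcongr; linarith [chiR_nonneg R ξ]
      _ = 1 * ((1 + ‖ξ‖^2) ^ (σ/2) * ‖U ξ‖) := by ring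
      _ ≤ ((R ^ (s-σ))⁻¹ * (1 + ‖ξ‖^2) ^ ((s-σ)/2)) * ((1 + ‖ξ‖^2) ^ (σ/2) * ‖U ξ‖) := by gcongr
      _ = _ := by ring

lemma L2_le_wN {d : ℕ} {s : ℝ} (hs : 0 ≤ s) (U : Rd d → ℂ) : eLpNorm U 2 volume ≤ wN s U := by
  have := eLpNorm_le_wN (σ := s) (V := U) (T := U) (b := 1) (fun ξ => by
    rw [one_mul]; exact le_mul_of_one_le_left (norm_nonneg _) (wgt_ge_one hs ξ))
  simpa using this

lemma tail_isFT {d : ℕ} {R : ℝ} (hR : 0 < R) {U u : Rd d → ℂ} (hU : MemLp U 2) (hu : MemLp u 2)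
    (h : IsFT U u) : IsFT (U - fun ξ => (chiR R ξ : ℂ) * U ξ) (u - Plow R U) :=
  isFT_sub hU hu (chiU_memLp hU) (Plow_memLp hR hU) h (Plow_isFT hR hU)

lemma nonvanish {d : ℕ} {p s : ℝ} (hp : 2 < p) (hs : d * (1/2 - 1/p) < s) {a : ℝ} (ha : 0 < a)
    (M : ℝ) : ∃ R > 0, ∃ b > 0, ∀ U u : Rd d → ℂ, MemLp U 2 → MemLp u 2 → IsFT U u →
      wN s U ≤ ENNReal.ofReal M → ENNReal.ofReal a ≤ eLpNorm u (ENNReal.ofReal p) volume →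
      ∃ x, b ≤ ‖Plow R U x‖ := by
  obtain ⟨σ, hσ1, hσ2⟩ := exists_between hs
  have hp2 : 1/p < 1/2 := one_div_lt_one_div_of_lt (by norm_num) hp
  have hs0 : 0 ≤ s := le_trans (mul_nonneg (Nat.cast_nonneg d) (by linarith)) hs.le
  obtain ⟨K, hK, hKs⟩ := sobolev (d := d) hp hσ1
  lift K to NNReal using hK
  have t1 : Tendsto (fun R : ℝ => (K:ℝ) * (R ^ (-(s-σ)) * M)) atTop (𝓝 ((K:ℝ) * (0 * M))) :=
    ((tendsto_rpow_neg_atTop (by linarith)).mul_const _).const_mul _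
  have t2 : Tendsto (fun b : ℝ => b ^ (1-2/p) * M ^ (2/p)) (𝓝[>] 0) (𝓝 (0 ^ (1-2/p) * M ^ (2/p))) := by
    refine Tendsto.mono_left ?_ nhdsWithin_le_nhds
    refine Tendsto.mul_const _ ?_
    refine (Real.continuousAt_rpow_const 0 (1-2/p) (Or.inr ?_)).tendsto
    have : 2/p < 1 := by rw [div_lt_one (by linarith)]; exact hp
    linarith
  have hq : 0 < 1 - 2/p := by
    have : 2/p < 1 := by rw [div_lt_one (by linarith)]; exact hp
    linarith
  rw [Real.zero_rpow hq.ne', zero_mul] at t2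
  simp only [zero_mul, mul_zero] at t1
  obtain ⟨R, hR1, hR⟩ := ((t1.eventually_lt_const (show 0 < a/2 by positivity)).and (eventually_gt_atTop 0)).exists
  obtain ⟨b, hb1, hb⟩ := ((t2.eventually_lt_const (show 0 < a/2 by positivity)).and eventually_mem_nhdsWithin).exists
  refine ⟨R, hR, b, hb, ?_⟩
  intro U u hU hu h hM hau
  by_contra! hcon
  have hPp : eLpNorm (Plow R U) (ENNReal.ofReal p) volume ≤ ENNReal.ofReal (b ^ (1-2/p) * M ^ (2/p)) := by
    refine (eLpNorm_interp hp (B := ENNReal.ofReal b) ENNReal.ofReal_ne_top ?_).trans ?_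
    · filter_upwards with x
      rw [← ofReal_norm]
      exact ENNReal.ofReal_le_ofReal (hcon x).le
    · have hle : eLpNorm (Plow R U) 2 volume ≤ ENNReal.ofReal M :=
        (Plow_norm_le hR hU).trans ((L2_le_wN hs0 U).trans hM)
      have h2p : 0 ≤ 2/p := by positivity
      rw [ENNReal.ofReal_mul (Real.rpow_nonneg (le_of_lt hb) _), ENNReal.ofReal_rpow_of_nonneg (le_of_lt hb) hq.le]
      gcongr
      rcases le_or_gt 0 M with hM0 | hM0
      · rw [← ENNReal.ofReal_rpow_of_nonneg hM0 h2p]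
        gcongr
      · rw [ENNReal.ofReal_of_nonpos hM0.le] at hle
        rw [nonpos_iff_eq_zero.1 hle, ENNReal.zero_rpow_of_pos (by positivity)]
        simp
  have hTp : eLpNorm (u - Plow R U) (ENNReal.ofReal p) volume ≤ ENNReal.ofReal ((K:ℝ) * (R ^ (-(s-σ)) * M)) := by
    refine (hKs _ _ (hU.sub (chiU_memLp hU)) (hu.sub (Plow_memLp hR hU)) (tail_isFT hR hU hu h)).trans ?_
    rw [ENNReal.ofReal_mul K.coe_nonneg, ENNReal.ofReal_coe_nnreal, ENNReal.ofReal_mul (by positivity)]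
    gcongr
    exact (tail_wN hR hσ2.le U).trans (by gcongr)
  have hsum : eLpNorm u (ENNReal.ofReal p) volume ≤
      eLpNorm (u - Plow R U) (ENNReal.ofReal p) volume + eLpNorm (Plow R U) (ENNReal.ofReal p) volume := by
    have := eLpNorm_add_le (p := ENNReal.ofReal p) (hu.sub (Plow_memLp hR hU)).1 (Plow_memLp hR hU).1
      (by rw [ENNReal.one_le_ofReal]; linarith)
    simpa using this
  have : ENNReal.ofReal a < ENNReal.ofReal a := calc
    ENNReal.ofReal a ≤ _ := hau.trans hsum
    _ ≤ _ := add_le_add hTp hPp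
    _ < ENNReal.ofReal (a/2) + ENNReal.ofReal (a/2) := by
        exact ENNReal.add_lt_add ((ENNReal.ofReal_lt_ofReal_iff (by positivity)).2 hR1)
          ((ENNReal.ofReal_lt_ofReal_iff (by positivity)).2 hb1)
    _ = ENNReal.ofReal a := by
        rw [← ENNReal.ofReal_add (by positivity) (by positivity)]; congr 1; ring
  exact lt_irrefl _ this

lemma tail_L2 {d : ℕ} {R s : ℝ} (hR : 0 < R) (hs : 0 ≤ s) {U u : Rd d → ℂ} (hU : MemLp U 2)
    (hu : MemLp u 2) (h : IsFT U u) :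
    eLpNorm (u - Plow R U) 2 volume ≤ ENNReal.ofReal (R ^ (-s)) * wN s U := by
  rw [plancherel (hU.sub (chiU_memLp hU)) (hu.sub (Plow_memLp hR hU)) (tail_isFT hR hU hu h)]
  have := tail_wN hR hs U
  rw [sub_zero] at this
  exact (L2_le_wN le_rfl _).trans this

/-- the last basis vector times `t` -/
def lastV {d : ℕ} (hd : 3 ≤ d) (t : ℝ) : Rd d := EuclideanSpace.single ⟨d-1, by omega⟩ t

lemma circPt_add_last {d : ℕ} (hd : 3 ≤ d) (r θ t : ℝ) :
    circPt hd r θ t = circPt hd r θ 0 + lastV hd t := by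
  ext i
  simp [circPt, lastV]

lemma Plow_modulate {d : ℕ} (R : ℝ) (U : Rd d → ℂ) (t x : Rd d) :
    Plow R (fun ξ => ((𝐞 ⟪ξ, t⟫ : Circle) : ℂ) * U ξ) x = Plow R U (x + t) := by
  rw [Plow_apply, Plow_apply]
  congr with ξ
  rw [inner_add_right, AddChar.map_add_eq_mul, Circle.coe_mul]
  ring

lemma concentrate {d : ℕ} (hd : 3 ≤ d) {p s : ℝ} (hp : 2 < p) (hs : d * (1/2 - 1/p) < s) {a : ℝ}
    (ha : 0 < a) {M : ℝ} (hM : 0 ≤ M) : ∃ R > 0, ∃ b > 0, ∃ r0 : ℝ, ∀ U u : Rd d → ℂ, MemLp U 2 →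
      MemLp u 2 → IsFT U u → GSymmetric d u →
      wN s U ≤ ENNReal.ofReal M → ENNReal.ofReal a ≤ eLpNorm u (ENNReal.ofReal p) volume →
      ∃ t : ℝ, ∃ y : Rd d, ‖y‖ ≤ r0 ∧
        b ≤ ‖Plow R (fun ξ => ((𝐞 ⟪ξ, lastV hd t⟫ : Circle) : ℂ) * U ξ) y‖ := by
  have hp2 : 1/p < 1/2 := one_div_lt_one_div_of_lt (by norm_num) hp
  have hs0 : 0 ≤ s := le_trans (mul_nonneg (Nat.cast_nonneg d) (by linarith)) hs.le
  obtain ⟨R, hR, b, hb, H⟩ := nonvanish hp hs ha M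
  obtain ⟨r0, hr0⟩ := decay hd hR (η := b / (M + 1)) (by positivity)
  refine ⟨R, hR, b, hb, r0, ?_⟩
  intro U u hU hu h hsy hUM hau
  obtain ⟨x, hx⟩ := H U u hU hu h hUM hau
  have hlt : √(blockSq d 1 x) < r0 := by
    by_contra! hcon
    have h1 := hr0 U u hU h hsy x hcon
    have h2 : (eLpNorm U 2 volume).toReal ≤ M :=
      ENNReal.toReal_le_of_le_ofReal hM ((L2_le_wN hs0 U).trans hUM)
    have h3 : b / (M+1) * (eLpNorm U 2 volume).toReal ≤ b / (M+1) * M := by gcongr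
    have h4 : b / (M+1) * M < b := by
      rw [div_mul_eq_mul_div, div_lt_iff₀ (by positivity)]
      nlinarith
    linarith
  refine ⟨x ⟨d-1, by omega⟩, circPt hd (√(blockSq d 1 x)) 0 0, ?_, ?_⟩
  · have h1 := circPt_norm hd (√(blockSq d 1 x)) 0 0
    have h2 : ‖circPt hd (√(blockSq d 1 x)) 0 0‖ = √(blockSq d 1 x) := by
      rw [← pow_left_inj₀ (norm_nonneg _) (Real.sqrt_nonneg _) two_ne_zero, h1]; ring
    rw [h2]; exact hlt.le
  · rw [Plow_modulate, ← circPt_add_last, ← Plow_circ hd hR h hsy]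
    exact hx

lemma hmod_tendsto {d : ℕ} {R : ℝ} (hR : 0 < R) {y : ℕ → Rd d} {z : Rd d}
    (hy : Tendsto y atTop (𝓝 z)) :
    Tendsto (fun n => (eLpNorm (hmod R (y n) - hmod R z) 2 volume).toReal) atTop (𝓝 0) := by
  have h1 : Tendsto (fun n => ∫ ξ, ‖(hmod R (y n) - hmod R z) ξ‖^2) atTop (𝓝 (∫ ξ : Rd d, (0:ℝ))) := by
    apply tendsto_integral_of_dominated_convergence (fun ξ => 4 * ‖((chiR R ξ : ℂ)^2)‖)
    · intro n
      exact (L2_integrable_sq ((hmod_memLp hR _).sub (hmod_memLp hR _))).1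
    · exact (chiR_sq_integrable hR).norm.const_mul 4
    · intro n
      filter_upwards with ξ
      have : ‖(hmod R (y n) - hmod R z) ξ‖ ≤ 2 * ‖(chiR R ξ : ℂ)‖ := by
        refine (norm_sub_le _ _).trans ?_
        simp only [hmod, norm_mul, Circle.norm_coe, one_mul]
        linarith
      rw [norm_pow, norm_norm, norm_pow]
      calc _ ≤ (2 * ‖(chiR R ξ : ℂ)‖)^2 := by gcongr
        _ = _ := by ring
    · filter_upwards with ξ
      have hc : Continuous (fun w : Rd d => ‖hmod R w ξ - hmod R z ξ‖^2) := by
        unfold hmod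
        fun_prop
      have := (hc.tendsto z).comp hy
      simpa [Function.comp_def] using this
  simp only [integral_zero] at h1
  have h2 := h1.sqrt
  rw [Real.sqrt_zero] at h2
  refine h2.congr (fun n => ?_)
  rw [← L2_normsq ((hmod_memLp hR _).sub (hmod_memLp hR _)), Real.sqrt_sq (by positivity)]

lemma weak_ne_zero {d : ℕ} {R : ℝ} (hR : 0 < R) {b r0 M : ℝ} (hb : 0 < b) {V : ℕ → Rd d → ℂ}
    {W : Rd d → ℂ} (hV : ∀ n, MemLp (V n) 2) (hM : ∀ n, (eLpNorm (V n) 2 volume).toReal ≤ M)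
    (hw : ∀ h : Rd d → ℂ, MemLp h 2 → Tendsto (fun n => ∫ x, V n x * h x) atTop
        (𝓝 (∫ x, W x * h x))) {y : ℕ → Rd d} (hy : ∀ n, ‖y n‖ ≤ r0)
    (hby : ∀ n, b ≤ ‖Plow R (V n) (y n)‖) : ¬ W =ᵐ[volume] (fun _ => (0:ℂ)) := by
  intro h0
  obtain ⟨z, -, φ, hφ, hz⟩ := (isCompact_closedBall (0 : Rd d) r0).tendsto_subseq
    (x := y) (fun n => by simpa using hy n)
  have hM0 : 0 ≤ M := le_trans ENNReal.toReal_nonneg (hM 0)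
  have e0 : ∫ x, W x * hmod R z x = 0 := by
    rw [integral_eq_zero_of_ae]
    filter_upwards [h0] with x hx
    simp [hx]
  have t1 := ((hw _ (hmod_memLp hR z)).comp hφ.tendsto_atTop).norm
  rw [e0, norm_zero] at t1
  have t2 := ((hmod_tendsto hR hz).const_mul M).add t1
  simp only [mul_zero, add_zero] at t2
  have h3 : ∀ n, b ≤ M * (eLpNorm (hmod R (y (φ n)) - hmod R z) 2 volume).toReal +
      ‖∫ x, V (φ n) x * hmod R z x‖ := by
    intro n
    refine (hby (φ n)).trans ?_
    rw [Plow_eq_hmod]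
    have i1 : Integrable (fun x => V (φ n) x * (hmod R (y (φ n)) - hmod R z) x) :=
      (hV _).integrable_mul ((hmod_memLp hR _).sub (hmod_memLp hR _))
    have i2 : Integrable (fun x => V (φ n) x * hmod R z x) := (hV _).integrable_mul (hmod_memLp hR _)
    have e : ∫ x, V (φ n) x * hmod R (y (φ n)) x =
        (∫ x, V (φ n) x * (hmod R (y (φ n)) - hmod R z) x) + ∫ x, V (φ n) x * hmod R z x := by
      rw [← integral_add i1 i2]
      congr with x
      simp only [Pi.sub_apply]; ring
    rw [e]
    refine (norm_add_le _ _).trans ?_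
    gcongr
    refine (L2_cauchy (hV _) ((hmod_memLp hR _).sub (hmod_memLp hR _))).trans ?_
    gcongr
    exact hM _
  have := ge_of_tendsto' t2 h3
  linarith

lemma ae_conv {d : ℕ} {s : ℝ} (hs : 0 < s) {M : ℝ≥0∞} (hMt : M ≠ ⊤) {V v : ℕ → Rd d → ℂ}
    {W w : Rd d → ℂ} (hV : ∀ n, MemLp (V n) 2) (hv : ∀ n, MemLp (v n) 2) (hVv : ∀ n, IsFT (V n) (v n))
    (hW : MemLp W 2) (hw2 : MemLp w 2) (hWw : IsFT W w)
    (hM : ∀ n, wN s (V n - W) ≤ M)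
    (hw : ∀ h : Rd d → ℂ, MemLp h 2 → Tendsto (fun n => ∫ x, V n x * h x) atTop
        (𝓝 (∫ x, W x * h x))) :
    ∃ φ : ℕ → ℕ, StrictMono φ ∧ ∀ᵐ x, Tendsto (fun n => v (φ n) x) atTop (𝓝 (w x)) := by
  obtain ⟨g, hg0, hgm, hg1⟩ := exists_pos_lintegral_lt_of_sigmaFinite (volume : Measure (Rd d)) (ε := 1) one_ne_zero
  set k : Rd d → ℝ≥0∞ := fun x => min (g x) 1 with hk
  have hkm : Measurable k := hgm.coe_nnreal_ennreal.min measurable_const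
  set ν : Measure (Rd d) := volume.withDensity k with hν
  have hνle : ν ≤ volume := by
    calc ν ≤ volume.withDensity 1 := withDensity_mono (by filter_upwards with x; exact min_le_right _ _)
      _ = volume := withDensity_one
  have hνf : IsFiniteMeasure ν := by
    apply isFiniteMeasure_withDensity
    refine ((lintegral_mono (fun x => min_le_left _ _)).trans_lt (hg1.trans ENNReal.one_lt_top)).ne
  have hac : (volume : Measure (Rd d)) ≪ ν := by
    apply withDensity_absolutelyContinuous' hkm.aemeasurable
    filter_upwards with x
    simp only [hk]
    intro h
    rcases min_choice (g x : ℝ≥0∞) 1 with h1 | h1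
    · rw [h1] at h; exact (hg0 x).ne' (by exact_mod_cast h)
    · rw [h1] at h; exact one_ne_zero h
  have hac2 : ν ≪ (volume : Measure (Rd d)) := Measure.absolutelyContinuous_of_le hνle
  have hD : ∀ n, MemLp (V n - W) 2 := fun n => (hV n).sub hW
  have hmain : Tendsto (fun n => eLpNorm (v n - w) 2 ν) atTop (𝓝 0) := by
    rw [ENNReal.tendsto_nhds_zero]
    intro δ hδ
    have tR : Tendsto (fun R : ℝ => ENNReal.ofReal (R ^ (-s)) * M) atTop (𝓝 0) := by
      have := ENNReal.Tendsto.mul_const (ENNReal.tendsto_ofReal (tendsto_rpow_neg_atTop hs)) (b := M) (Or.inr hMt)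
      simpa using this
    have hδ2 : 0 < δ / 2 := ENNReal.half_pos hδ.ne'
    obtain ⟨R, hR1, hR⟩ := ((tR.eventually_lt_const hδ2).and (eventually_gt_atTop 0)).exists
    have hP : Tendsto (fun n => eLpNorm (Plow R (V n - W)) 2 ν) atTop (𝓝 0) := by
      set B : ℝ := M.toReal * √(∫ ξ : Rd d, chiR R ξ ^ 2)
      have hB : ∀ n x, ‖Plow R (V n - W) x‖ ≤ B := by
        intro n x
        rw [Plow_eq_hmod]
        refine (L2_cauchy (hD n) (hmod_memLp hR x)).trans ?_
        have e1 : (eLpNorm (hmod R x) 2 volume).toReal = √(∫ ξ : Rd d, chiR R ξ ^ 2) := by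
          rw [← Real.sqrt_sq (ENNReal.toReal_nonneg (a := eLpNorm (hmod R x) 2 volume)),
            L2_normsq (hmod_memLp hR x)]
          congr 2 with ξ
          rw [hmod, norm_mul, Circle.norm_coe, one_mul, norm_chiR]
        rw [e1]
        refine mul_le_mul_of_nonneg_right (ENNReal.toReal_mono hMt ((L2_le_wN hs.le _).trans (hM n))) (Real.sqrt_nonneg _)
      have hpt : ∀ x, Tendsto (fun n => Plow R (V n - W) x) atTop (𝓝 0) := by
        intro x
        have h1 := (hw _ (hmod_memLp hR x)).sub_const (∫ ξ, W ξ * hmod R x ξ)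
        rw [sub_self] at h1
        refine h1.congr (fun n => ?_)
        have i1 : Integrable (fun ξ => V n ξ * hmod R x ξ) := (hV _).integrable_mul (hmod_memLp hR _)
        have i2 : Integrable (fun ξ => W ξ * hmod R x ξ) := hW.integrable_mul (hmod_memLp hR _)
        rw [Plow_eq_hmod, ← integral_sub i1 i2]
        congr with ξ
        simp only [Pi.sub_apply]; ring
      have hl : Tendsto (fun n => ∫⁻ x, ‖Plow R (V n - W) x‖ₑ ^ (2:ℝ) ∂ν) atTop (𝓝 (∫⁻ x, 0 ∂ν)) := by
        apply tendsto_lintegral_of_dominated_convergence' (fun _ => ENNReal.ofReal B ^ (2:ℝ))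
        · intro n
          exact (((Plow_memLp hR (hD n)).1.mono_ac hac2).enorm).pow_const _
        · intro n
          filter_upwards with x
          gcongr
          rw [← ofReal_norm]
          exact ENNReal.ofReal_le_ofReal (hB n x)
        · rw [lintegral_const]
          exact ENNReal.mul_ne_top (ENNReal.rpow_ne_top_of_nonneg (by norm_num) ENNReal.ofReal_ne_top)
            (measure_ne_top _ _)
        · filter_upwards with x
          have h1 := ((hpt x).enorm).ennrpow_const 2
          simpa using h1
      rw [lintegral_zero] at hl
      have h2 := hl.ennrpow_const (1/2)
      rw [ENNReal.zero_rpow_of_pos (by norm_num)] at h2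
      refine h2.congr (fun n => ?_)
      rw [eLpNorm_eq_lintegral_rpow_enorm_toReal (by norm_num) (by norm_num)]
      simp
    filter_upwards [hP.eventually_lt_const hδ2] with n hn
    have hsum : eLpNorm (v n - w) 2 ν ≤ eLpNorm ((v n - w) - Plow R (V n - W)) 2 ν + eLpNorm (Plow R (V n - W)) 2 ν := by
      have := eLpNorm_add_le (p := 2) (μ := ν) ((((hv n).sub hw2).sub (Plow_memLp hR (hD n))).1.mono_ac hac2)
        ((Plow_memLp hR (hD n)).1.mono_ac hac2) (by norm_num)
      simpa using this
    refine hsum.trans ?_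
    have h1 : eLpNorm ((v n - w) - Plow R (V n - W)) 2 ν ≤ δ/2 := by
      refine (eLpNorm_mono_measure _ hνle).trans ?_
      refine (tail_L2 hR hs.le (hD n) ((hv n).sub hw2) (isFT_sub (hV n) (hv n) hW hw2 (hVv n) hWw)).trans ?_
      refine le_trans ?_ hR1.le
      gcongr
      exact hM n
    calc _ ≤ δ/2 + δ/2 := add_le_add h1 hn.le
      _ = δ := ENNReal.add_halves δ
  have hmeas := tendstoInMeasure_of_tendsto_eLpNorm (μ := ν) (p := 2) (by norm_num)
    (fun n => (hv n).1.mono_ac hac2) (hw2.1.mono_ac hac2) hmain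
  obtain ⟨φ, hφ, h⟩ := hmeas.exists_seq_tendsto_ae
  exact ⟨φ, hφ, hac.ae_le h⟩

lemma LpN_pow {d : ℕ} {p : ℝ} (hp : 2 < p) {f : Rd d → ℂ} (hf : MemLp f (ENNReal.ofReal p)) :
    LpN p f ^ p = ∫ x, ‖f x‖ ^ p := by
  have hp0 : 0 < p := by linarith
  unfold LpN
  rw [hf.eLpNorm_eq_integral_rpow_norm (by simpa using hp0) (by simp),
    ENNReal.toReal_ofReal (by positivity), ENNReal.toReal_ofReal hp0.le,
    ← Real.rpow_mul (by positivity), inv_mul_cancel₀ hp0.ne', Real.rpow_one]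

lemma Lp_int {d : ℕ} {p : ℝ} (hp : 2 < p) {f : Rd d → ℂ} (hf : MemLp f (ENNReal.ofReal p)) :
    Integrable (fun x => ‖f x‖ ^ p) := by
  have hp0 : 0 < p := by linarith
  have := hf.integrable_norm_rpow (by simpa using hp0) (by simp)
  rwa [ENNReal.toReal_ofReal hp0.le] at this

lemma convex_ineq {p t : ℝ} (hp : 2 < p) (ht : 0 < t) (ht1 : t < 1) {a b k : ℝ} (ha : 0 ≤ a)
    (hb : 0 ≤ b) (hk : 0 ≤ k) (h : k ≤ a + b) :
    k ^ p ≤ (1-t) ^ (1-p) * a ^ p + t ^ (1-p) * b ^ p := by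
  have h1 : 0 < 1 - t := by linarith
  have hc := (convexOn_rpow (p := p) (by linarith)).2 (x := a/(1-t)) (y := b/t)
    (Set.mem_Ici.2 (by positivity)) (Set.mem_Ici.2 (by positivity)) h1.le ht.le (by ring)
  simp only [smul_eq_mul] at hc
  have e1 : (1-t) * (a/(1-t)) + t * (b/t) = a + b := by field_simp
  rw [e1, Real.div_rpow ha h1.le, Real.div_rpow hb ht.le] at hc
  calc k ^ p ≤ (a+b)^p := by gcongr
    _ ≤ _ := hc
    _ = _ := by
      rw [Real.rpow_sub h1, Real.rpow_sub ht, Real.rpow_one, Real.rpow_one]; ring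

lemma brezis_lieb {d : ℕ} {p : ℝ} (hp : 2 < p) {u : ℕ → Rd d → ℂ} {w : Rd d → ℂ}
    (hu : ∀ n, MemLp (u n) (ENNReal.ofReal p)) (hw : MemLp w (ENNReal.ofReal p))
    (hae : ∀ᵐ x, Tendsto (fun n => u n x) atTop (𝓝 (w x))) {X Y : ℝ} {Yn : ℕ → ℝ}
    (hX : Tendsto (fun n => LpN p (u n) ^ p) atTop (𝓝 X))
    (hYn : ∀ n, LpN p (u n - w) ^ p ≤ Yn n) (hY : Tendsto Yn atTop (𝓝 Y)) :
    X ≤ Y + LpN p w ^ p := by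
  have hp0 : 0 < p := by linarith
  set Z := LpN p w ^ p with hZ
  have key : ∀ t : ℝ, 0 < t → t < 1 → X ≤ (1-t) ^ (1-p) * Y + Z := by
    intro t ht ht1
    set C1 := (1-t) ^ (1-p)
    set C2 := t ^ (1-p)
    have hC1 : 0 ≤ C1 := Real.rpow_nonneg (by linarith) _
    have hC2 : 0 ≤ C2 - 1 := by
      have : 1 ≤ C2 := Real.one_le_rpow_of_pos_of_le_one_of_nonpos ht ht1.le (by linarith)
      linarith
    set hn : ℕ → Rd d → ℝ := fun n x => C1 * ‖(u n - w) x‖ ^ p + C2 * ‖w x‖ ^ p - ‖u n x‖ ^ p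
    have hn0 : ∀ n x, 0 ≤ hn n x := by
      intro n x
      have := convex_ineq hp ht ht1 (norm_nonneg ((u n - w) x)) (norm_nonneg (w x)) (norm_nonneg (u n x))
        (by have := norm_add_le ((u n - w) x) (w x); simpa using this)
      simp only [hn]; linarith
    have i1 : ∀ n, Integrable (fun x => C1 * ‖(u n - w) x‖ ^ p) := fun n =>
      (Lp_int hp ((hu n).sub hw)).const_mul _
    have i2 : Integrable (fun x => C2 * ‖w x‖ ^ p) := (Lp_int hp hw).const_mul _
    have i3 : ∀ n, Integrable (hn n) := fun n => ((i1 n).add i2).sub (Lp_int hp (hu n))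
    have hI : ∀ n, ∫ x, hn n x = C1 * LpN p (u n - w) ^ p + C2 * Z - LpN p (u n) ^ p := by
      intro n
      have i12 : Integrable (fun x => C1 * ‖(u n - w) x‖ ^ p + C2 * ‖w x‖ ^ p) := (i1 n).add i2
      simp only [hn]
      rw [integral_sub i12 (Lp_int hp (hu n)), integral_add (i1 n) i2, integral_const_mul,
        integral_const_mul, LpN_pow hp ((hu n).sub hw), hZ, LpN_pow hp hw, LpN_pow hp (hu n)]
    have hlim : ∀ᵐ x, liminf (fun n => ENNReal.ofReal (hn n x)) atTop = ENNReal.ofReal ((C2-1) * ‖w x‖ ^ p) := by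
      filter_upwards [hae] with x hx
      apply Tendsto.liminf_eq
      apply ENNReal.tendsto_ofReal
      have t1 : Tendsto (fun n => ‖(u n - w) x‖ ^ p) atTop (𝓝 0) := by
        have := (hx.sub_const (w x)).norm.rpow_const (p := p) (Or.inr hp0.le)
        simpa [Real.zero_rpow hp0.ne'] using this
      have t2 : Tendsto (fun n => ‖u n x‖ ^ p) atTop (𝓝 (‖w x‖^p)) :=
        hx.norm.rpow_const (Or.inr hp0.le)
      have t3 := ((t1.const_mul C1).add_const (C2 * ‖w x‖^p)).sub t2
      convert t3 using 2
      ring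
    have hF : ∫⁻ x, liminf (fun n => ENNReal.ofReal (hn n x)) atTop ≤
        liminf (fun n => ∫⁻ x, ENNReal.ofReal (hn n x)) atTop := lintegral_liminf_le'
      (fun n => (i3 n).1.aemeasurable.ennreal_ofReal)
    rw [lintegral_congr_ae hlim] at hF
    simp_rw [← ofReal_integral_eq_lintegral_ofReal (i3 _) (Eventually.of_forall (hn0 _))] at hF
    rw [← ofReal_integral_eq_lintegral_ofReal ((Lp_int hp hw).const_mul _)
      (Eventually.of_forall (fun x => mul_nonneg hC2 (by positivity))), integral_const_mul,
      ← LpN_pow hp hw, ← hZ] at hF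
    have tl : Tendsto (fun n => C1 * Yn n + C2 * Z - LpN p (u n) ^ p) atTop (𝓝 (C1 * Y + C2 * Z - X)) :=
      ((hY.const_mul C1).add_const _).sub hX
    have hle : ∀ n, ∫ x, hn n x ≤ C1 * Yn n + C2 * Z - LpN p (u n) ^ p := by
      intro n
      rw [hI]
      gcongr
      exact hYn n
    have hpos : 0 ≤ C1 * Y + C2 * Z - X :=
      ge_of_tendsto' tl (fun n => (integral_nonneg (hn0 n)).trans (hle n))
    have hF2 : liminf (fun n => ENNReal.ofReal (∫ x, hn n x)) atTop ≤ ENNReal.ofReal (C1 * Y + C2 * Z - X) := by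
      rw [← (ENNReal.tendsto_ofReal tl).liminf_eq]
      exact liminf_le_liminf <| Eventually.of_forall (fun n => ENNReal.ofReal_le_ofReal (hle n))
    have := (ENNReal.ofReal_le_ofReal_iff hpos).1 (hF.trans hF2)
    linarith
  have tt : Tendsto (fun t : ℝ => (1-t) ^ (1-p) * Y + Z) (𝓝[>] 0) (𝓝 (Y + Z)) := by
    have hc : ContinuousAt (fun t : ℝ => (1-t) ^ (1-p) * Y + Z) 0 := by
      apply ContinuousAt.add_const
      apply ContinuousAt.mul_const
      exact ContinuousAt.rpow_const (by fun_prop) (Or.inl (by norm_num))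
    have := hc.tendsto
    simp only [sub_zero, Real.one_rpow, one_mul] at this
    exact this.mono_left nhdsWithin_le_nhds
  refine ge_of_tendsto tt ?_
  filter_upwards [Ioo_mem_nhdsGT (show (0:ℝ) < 1 by norm_num)] with t ht
  exact key t ht.1 ht.2

/-- two-sided bounds for a symbol -/
structure SymB (s c1 C1 : ℝ) (g : ℝ → ℝ) : Prop where
  meas : Measurable g
  s_pos : 0 < s
  c_pos : 0 < c1
  lo : ∀ r : ℝ, 0 ≤ r → c1 * (1 + r^2) ^ s ≤ g r
  hi : ∀ r : ℝ, 0 ≤ r → g r ≤ C1 * (1 + r^2) ^ s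

/-- square root of the symbol times `U` -/
def fS {d : ℕ} (g : ℝ → ℝ) (U : Rd d → ℂ) (ξ : Rd d) : ℂ := ((√(g ‖ξ‖) : ℝ) : ℂ) * U ξ

/-- pairs with finite energy -/
def Good {d : ℕ} (g : ℝ → ℝ) (U u : Rd d → ℂ) : Prop :=
  MemLp U 2 ∧ MemLp u 2 ∧ IsFT U u ∧ MemLp (fS g U) 2

/-- energy norm -/
def NN {d : ℕ} (g : ℝ → ℝ) (U : Rd d → ℂ) : ℝ := (eLpNorm (fS g U) 2 volume).toReal

lemma half_sq {s x : ℝ} (hx : 0 < x) : x ^ s = (x ^ (s/2))^2 := by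
  rw [← Real.rpow_natCast, ← Real.rpow_mul hx.le]; congr 1; push_cast; ring

lemma sqrt_sym_lo {d : ℕ} {s c1 C1 : ℝ} {g : ℝ → ℝ} (hg : SymB s c1 C1 g) (ξ : Rd d) :
    √c1 * (1 + ‖ξ‖^2) ^ (s/2) ≤ √(g ‖ξ‖) := by
  apply Real.le_sqrt_of_sq_le
  rw [mul_pow, Real.sq_sqrt hg.c_pos.le, ← half_sq (by positivity)]
  exact hg.lo _ (norm_nonneg _)

lemma sym_pos {d : ℕ} {s c1 C1 : ℝ} {g : ℝ → ℝ} (hg : SymB s c1 C1 g) (ξ : Rd d) :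
    0 < g ‖ξ‖ := lt_of_lt_of_le (mul_pos hg.c_pos (by positivity)) (hg.lo _ (norm_nonneg ξ))

lemma sym_lo1 {d : ℕ} {s c1 C1 : ℝ} {g : ℝ → ℝ} (hg : SymB s c1 C1 g) (ξ : Rd d) :
    √c1 ≤ √(g ‖ξ‖) :=
  le_trans (le_mul_of_one_le_right (Real.sqrt_nonneg _) (wgt_ge_one hg.s_pos.le ξ)) (sqrt_sym_lo hg ξ)

lemma fS_norm {d : ℕ} (g : ℝ → ℝ) (U : Rd d → ℂ) (ξ : Rd d) : ‖fS g U ξ‖ = √(g ‖ξ‖) * ‖U ξ‖ := by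
  rw [fS, norm_mul, Complex.norm_real, Real.norm_of_nonneg (Real.sqrt_nonneg _)]

lemma wN_le_fS {d : ℕ} {s c1 C1 : ℝ} {g : ℝ → ℝ} (hg : SymB s c1 C1 g) (U : Rd d → ℂ) :
    wN s U ≤ ENNReal.ofReal (√c1)⁻¹ * eLpNorm (fS g U) 2 volume := by
  unfold wN
  apply eLpNorm_le_mul_eLpNorm_of_ae_le_mul
  filter_upwards with ξ
  have hc := Real.sqrt_pos.2 hg.c_pos
  rw [fS_norm, norm_mul, Complex.norm_real, Real.norm_of_nonneg (by positivity), ← mul_assoc]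
  gcongr
  rw [inv_mul_eq_div, le_div_iff₀ hc, mul_comm]
  exact sqrt_sym_lo hg ξ

lemma NN_sq {d : ℕ} {s c1 C1 : ℝ} {g : ℝ → ℝ} (hg : SymB s c1 C1 g) {U u : Rd d → ℂ}
    (h : Good g U u) : NN g U ^ 2 = ∫ ξ, ‖U ξ‖^2 * g ‖ξ‖ := by
  rw [NN, L2_normsq h.2.2.2]
  congr with ξ
  rw [fS_norm, mul_pow, Real.sq_sqrt (sym_pos hg ξ).le]; ring

lemma sqrtg_meas {d : ℕ} {g : ℝ → ℝ} (hg : Measurable g) :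
    Measurable (fun ξ : Rd d => ((√(g ‖ξ‖) : ℝ) : ℂ)) := by fun_prop

lemma Good_of_Hs {d : ℕ} {s c1 C1 : ℝ} {g : ℝ → ℝ} (hg : SymB s c1 C1 g) (u : HsFn d s) :
    Good g u.ft u.toFun := by
  refine ⟨u.ft_memL2, u.memL2, u.isFT, ?_⟩
  have hm : AEStronglyMeasurable (fS g u.ft) volume :=
    (sqrtg_meas hg.meas).aestronglyMeasurable.mul u.ft_memL2.1
  rw [memLp_two_iff_integrable_sq_norm hm]
  refine (u.memHs.const_mul C1).mono' ?_ ?_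
  · exact (hm.norm.pow 2)
  · filter_upwards with ξ
    rw [fS_norm, mul_pow, Real.sq_sqrt (sym_pos hg ξ).le, Real.norm_of_nonneg
      (mul_nonneg (sym_pos hg ξ).le (by positivity))]
    have := hg.hi _ (norm_nonneg ξ)
    calc g ‖ξ‖ * ‖u.ft ξ‖^2 ≤ (C1 * (1 + ‖ξ‖^2)^s) * ‖u.ft ξ‖^2 := by gcongr
      _ = _ := by ring

/-- build an element of `H^s` -/
def mkHs {d : ℕ} {s c1 C1 : ℝ} {g : ℝ → ℝ} (hg : SymB s c1 C1 g) {U u : Rd d → ℂ}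
    (h : Good g U u) : HsFn d s where
  toFun := u
  ft := U
  memL2 := h.2.1
  ft_memL2 := h.1
  isFT := h.2.2.1
  memHs := by
    have hi := L2_integrable_sq h.2.2.2
    refine (hi.const_mul c1⁻¹).mono' ?_ ?_
    · have hm : Measurable (fun ξ : Rd d => (1 + ‖ξ‖^2)^s) := by fun_prop
      exact (h.1.1.norm.pow 2).mul hm.aestronglyMeasurable
    · filter_upwards with ξ
      rw [fS_norm, mul_pow, Real.sq_sqrt (sym_pos hg ξ).le, Real.norm_of_nonneg (by positivity)]
      have := hg.lo _ (norm_nonneg ξ)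
      have hc := hg.c_pos
      rw [inv_mul_eq_div, le_div_iff₀ hc]
      calc ‖U ξ‖ ^ 2 * (1 + ‖ξ‖ ^ 2) ^ s * c1 = (c1 * (1 + ‖ξ‖ ^ 2) ^ s) * ‖U ξ‖^2 := by ring
        _ ≤ _ := by gcongr

lemma Good_smul {d : ℕ} {g : ℝ → ℝ} {U u : Rd d → ℂ} (h : Good g U u) (a : ℂ) :
    Good g (fun ξ => a * U ξ) (fun x => a * u x) := by
  refine ⟨h.1.const_mul a, h.2.1.const_mul a, isFT_smul a h.2.2.1, ?_⟩
  have : fS g (fun ξ => a * U ξ) = fun ξ => a * fS g U ξ := by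
    ext ξ; simp only [fS]; ring
  rw [this]; exact h.2.2.2.const_mul a

lemma NN_smul {d : ℕ} {g : ℝ → ℝ} (U : Rd d → ℂ) (a : ℂ) :
    NN g (fun ξ => a * U ξ) = ‖a‖ * NN g U := by
  have : fS g (fun ξ => a * U ξ) = a • fS g U := by
    ext ξ; simp only [fS, Pi.smul_apply, smul_eq_mul]; ring
  rw [NN, NN, this, eLpNorm_const_smul, ENNReal.toReal_mul, toReal_enorm]

lemma LpN_smul {d : ℕ} (p : ℝ) (u : Rd d → ℂ) (a : ℂ) :
    LpN p (fun x => a * u x) = ‖a‖ * LpN p u := by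
  have : (fun x => a * u x) = a • u := by ext x; simp
  rw [LpN, LpN, this, eLpNorm_const_smul, ENNReal.toReal_mul, toReal_enorm]

lemma fS_sub {d : ℕ} (g : ℝ → ℝ) (U V : Rd d → ℂ) : fS g (U - V) = fS g U - fS g V := by
  ext ξ; simp only [fS, Pi.sub_apply]; ring

lemma Good_sub {d : ℕ} {g : ℝ → ℝ} {U u V v : Rd d → ℂ} (h : Good g U u) (h' : Good g V v) :
    Good g (U - V) (u - v) := by
  refine ⟨h.1.sub h'.1, h.2.1.sub h'.2.1, isFT_sub h.1 h.2.1 h'.1 h'.2.1 h.2.2.1 h'.2.2.1, ?_⟩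
  rw [fS_sub]; exact h.2.2.2.sub h'.2.2.2

lemma mod_norm {d : ℕ} (U : Rd d → ℂ) (t ξ : Rd d) : ‖((𝐞 ⟪ξ, t⟫ : Circle) : ℂ) * U ξ‖ = ‖U ξ‖ := by
  rw [norm_mul, Circle.norm_coe, one_mul]

lemma mod_meas {d : ℕ} {U : Rd d → ℂ} (h : AEStronglyMeasurable U volume) (t : Rd d) :
    AEStronglyMeasurable (fun ξ => ((𝐞 ⟪ξ, t⟫ : Circle) : ℂ) * U ξ) volume := by
  have hc : Continuous (fun ξ : Rd d => ((𝐞 ⟪ξ, t⟫ : Circle) : ℂ)) := by fun_prop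
  exact hc.aestronglyMeasurable.mul h

lemma mod_memLp {d : ℕ} {U : Rd d → ℂ} (h : MemLp U 2) (t : Rd d) :
    MemLp (fun ξ => ((𝐞 ⟪ξ, t⟫ : Circle) : ℂ) * U ξ) 2 :=
  (memLp_congr_norm (mod_meas h.1 t) h.1 (Eventually.of_forall (fun ξ => mod_norm U t ξ))).2 h

lemma fS_mod {d : ℕ} (g : ℝ → ℝ) (U : Rd d → ℂ) (t : Rd d) :
    fS g (fun ξ => ((𝐞 ⟪ξ, t⟫ : Circle) : ℂ) * U ξ) = fun ξ => ((𝐞 ⟪ξ, t⟫ : Circle) : ℂ) * fS g U ξ := by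
  ext ξ; simp only [fS]; ring

lemma Good_translate {d : ℕ} {g : ℝ → ℝ} {U u : Rd d → ℂ} (h : Good g U u) (t : Rd d) :
    Good g (fun ξ => ((𝐞 ⟪ξ, t⟫ : Circle) : ℂ) * U ξ) (fun x => u (x + t)) := by
  refine ⟨mod_memLp h.1 t, ?_, isFT_translate h.2.2.1 t, ?_⟩
  · exact h.2.1.comp_measurePreserving (measurePreserving_add_right volume t)
  · rw [fS_mod]; exact mod_memLp h.2.2.2 t

lemma NN_translate {d : ℕ} {g : ℝ → ℝ} (U : Rd d → ℂ) (t : Rd d) :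
    NN g (fun ξ => ((𝐞 ⟪ξ, t⟫ : Circle) : ℂ) * U ξ) = NN g U := by
  rw [NN, NN, fS_mod]
  congr 1
  exact eLpNorm_congr_norm_ae (Eventually.of_forall (fun ξ => mod_norm _ t ξ))

lemma LpN_translate {d : ℕ} (p : ℝ) {u : Rd d → ℂ} (hu : AEStronglyMeasurable u volume) (t : Rd d) :
    LpN p (fun x => u (x + t)) = LpN p u := by
  rw [LpN, LpN]
  congr 1
  exact eLpNorm_comp_measurePreserving hu (measurePreserving_add_right volume t)

lemma GSymm_translate {d : ℕ} (hd : 3 ≤ d) {u : Rd d → ℂ} (h : GSymmetric d u) (t : ℝ) :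
    GSymmetric d (fun x => u (x + lastV hd t)) := by
  have hb : ∀ x : Rd d, blockSq d 1 (x + lastV hd t) = blockSq d 1 x := by
    intro x
    unfold blockSq
    refine Finset.sum_congr rfl (fun i _ => ?_)
    split_ifs with hi
    · have : i ≠ ⟨d-1, by omega⟩ := by
        intro h; rw [h] at hi; simp at hi
      simp [lastV, this]
    · rfl
  intro x y h1 h2
  apply h
  · rw [hb, hb, h1]
  · intro i hi
    rw [PiLp.add_apply, PiLp.add_apply, h2 i hi]

lemma GSymm_smul {d : ℕ} {u : Rd d → ℂ} (h : GSymmetric d u) (a : ℂ) :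
    GSymmetric d (fun x => a * u x) := fun x y h1 h2 => by simp only [h x y h1 h2]

lemma GSymm_sub {d : ℕ} {u v : Rd d → ℂ} (h : GSymmetric d u) (h' : GSymmetric d v) :
    GSymmetric d (u - v) := fun x y h1 h2 => by simp only [Pi.sub_apply, h x y h1 h2, h' x y h1 h2]

lemma Good_sobolev {d : ℕ} {p s c1 C1 : ℝ} (hp : 2 < p) (hs : d * (1/2 - 1/p) < s) {g : ℝ → ℝ}
    (hg : SymB s c1 C1 g) : ∃ K : ℝ, 0 < K ∧ ∀ U u : Rd d → ℂ, Good g U u →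
      MemLp u (ENNReal.ofReal p) ∧ LpN p u ≤ K * NN g U := by
  obtain ⟨K, hK, H⟩ := sobolev (d := d) hp hs
  refine ⟨(K * ENNReal.ofReal (√c1)⁻¹).toReal + 1, by positivity, fun U u h => ?_⟩
  have h1 : eLpNorm u (ENNReal.ofReal p) volume ≤ K * ENNReal.ofReal (√c1)⁻¹ * eLpNorm (fS g U) 2 volume := by
    rw [mul_assoc]
    refine (H U u h.1 h.2.1 h.2.2.1).trans ?_
    gcongr
    exact wN_le_fS hg U
  have hf : K * ENNReal.ofReal (√c1)⁻¹ * eLpNorm (fS g U) 2 volume ≠ ⊤ :=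
    ENNReal.mul_ne_top (ENNReal.mul_ne_top hK ENNReal.ofReal_ne_top) h.2.2.2.2.ne
  refine ⟨⟨h.2.1.1, h1.trans_lt hf.lt_top⟩, ?_⟩
  have h2 := ENNReal.toReal_mono hf h1
  rw [ENNReal.toReal_mul] at h2
  have : 0 ≤ NN g U := ENNReal.toReal_nonneg
  unfold LpN
  unfold NN at *
  nlinarith

lemma inv_sqrt_memLp {d : ℕ} {s c1 C1 : ℝ} {g : ℝ → ℝ} (hg : SymB s c1 C1 g) {h : Rd d → ℂ}
    (hh : MemLp h 2) : MemLp (fun ξ => (((√(g ‖ξ‖))⁻¹ : ℝ) : ℂ) * h ξ) 2 := by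
  refine (hh.const_mul (((√c1)⁻¹ : ℝ) : ℂ)).of_le ?_ ?_
  · have hm : Measurable (fun ξ : Rd d => (((√(g ‖ξ‖))⁻¹ : ℝ) : ℂ)) := by
      have := hg.meas
      fun_prop
    exact hm.aestronglyMeasurable.mul hh.1
  · filter_upwards with ξ
    have hc := Real.sqrt_pos.2 hg.c_pos
    rw [norm_mul, norm_mul, Complex.norm_real, Complex.norm_real, Real.norm_of_nonneg (by positivity),
      Real.norm_of_nonneg (by positivity)]
    exact mul_le_mul_of_nonneg_right (inv_anti₀ hc (sym_lo1 hg ξ)) (norm_nonneg _)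

lemma L2_weak_sub {d : ℕ} {f : ℕ → Rd d → ℂ} {F : Rd d → ℂ} (hf : ∀ n, MemLp (f n) 2) (hF : MemLp F 2)
    (hw : ∀ h : Rd d → ℂ, MemLp h 2 → Tendsto (fun n => ∫ x, f n x * h x) atTop
        (𝓝 (∫ x, F x * h x))) (h1 : ∀ n, (eLpNorm (f n) 2 volume).toReal = 1) :
    Tendsto (fun n => (eLpNorm (f n - F) 2 volume).toReal ^ 2) atTop
      (𝓝 (1 - (eLpNorm F 2 volume).toReal^2)) := by
  have hFc : MemLp (fun x => (starRingEnd ℂ) (F x)) 2 := hF.star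
  have t1 := (Complex.continuous_re.tendsto _).comp (hw _ hFc)
  have e1 : (∫ x, F x * (starRingEnd ℂ) (F x)).re = (eLpNorm F 2 volume).toReal^2 := by
    rw [L2_normsq hF]
    have : (fun x => F x * (starRingEnd ℂ) (F x)) = fun x => ((‖F x‖^2 : ℝ) : ℂ) := by
      ext x; rw [Complex.mul_conj']; push_cast; rfl
    rw [this, integral_complex_ofReal, Complex.ofReal_re]
  rw [e1] at t1
  have t2 := ((t1.const_mul 2).const_sub (1 + (eLpNorm F 2 volume).toReal^2))
  have e3 : 1 + (eLpNorm F 2 volume).toReal^2 - 2 * (eLpNorm F 2 volume).toReal^2 = 1 - (eLpNorm F 2 volume).toReal^2 := by ring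
  rw [e3] at t2
  refine t2.congr (fun n => ?_)
  rw [L2_normsq ((hf n).sub hF), L2_normsq hF]
  have e2 : ∫ x, ‖f n x‖^2 = 1 := by rw [← L2_normsq (hf n), h1 n]; norm_num
  have i0 : Integrable (fun x => f n x * (starRingEnd ℂ) (F x)) := (hf n).integrable_mul hFc
  have i1 : Integrable (fun x => (f n x * (starRingEnd ℂ) (F x)).re) := i0.re
  have e4 : (∫ x, f n x * (starRingEnd ℂ) (F x)).re = ∫ x, (f n x * (starRingEnd ℂ) (F x)).re :=
    (integral_re i0).symm
  have i2 : Integrable (fun x => ‖f n x‖^2 + ‖F x‖^2) :=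
    (L2_integrable_sq (hf n)).add (L2_integrable_sq hF)
  simp only [Function.comp_apply]
  rw [e4, ← e2, ← integral_const_mul, ← integral_add (L2_integrable_sq (hf n)) (L2_integrable_sq hF),
    ← integral_sub i2 (i1.const_mul 2)]
  congr with x
  simp only [Pi.sub_apply]
  rw [← Complex.normSq_eq_norm_sq, ← Complex.normSq_eq_norm_sq, ← Complex.normSq_eq_norm_sq,
    Complex.normSq_sub]

lemma final_real {p A m L : ℝ} (hp : 2 < p) (hA : 0 < A) (hm : 0 ≤ m) (hm1 : m ≤ 1) (hL : 0 ≤ L)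
    (h : A ^ p ≤ (A * √(1-m)) ^ p + L ^ p) : A * √m ≤ L := by
  have hp0 : 0 < p := by linarith
  have key : ∀ x : ℝ, 0 ≤ x → x ≤ 1 → (√x) ^ p ≤ x := by
    intro x hx hx1
    rw [Real.sqrt_eq_rpow, ← Real.rpow_mul hx]
    calc x ^ (1/2 * p) ≤ x ^ (1:ℝ) := Real.rpow_le_rpow_of_exponent_ge' hx hx1 (by norm_num) (by linarith)
      _ = x := Real.rpow_one x
  have h1 := key m hm hm1
  have h2 := key (1-m) (by linarith) (by linarith)
  rw [Real.mul_rpow hA.le (Real.sqrt_nonneg _)] at h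
  have hAp : 0 < A ^ p := Real.rpow_pos_of_pos hA p
  have h3 : (A * √m) ^ p ≤ L ^ p := by
    rw [Real.mul_rpow hA.le (Real.sqrt_nonneg _)]
    nlinarith
  exact (Real.rpow_le_rpow_iff (by positivity) hL hp0).1 h3

lemma core {d : ℕ} {p s c1 C1 : ℝ} (hp : 2 < p) (hs : d * (1/2 - 1/p) < s) {g : ℝ → ℝ}
    (hg : SymB s c1 C1 g) {A R b r0 : ℝ} (hA : 0 < A) (hR : 0 < R) (hb : 0 < b)
    (hAll : ∀ U u : Rd d → ℂ, Good g U u → GSymmetric d u → LpN p u ≤ A * NN g U)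
    {V v : ℕ → Rd d → ℂ} (hV : ∀ n, Good g (V n) (v n)) (hsy : ∀ n, GSymmetric d (v n))
    (hN : ∀ n, NN g (V n) = 1) (hlim : Tendsto (fun n => LpN p (v n)) atTop (𝓝 A))
    {y : ℕ → Rd d} (hy : ∀ n, ‖y n‖ ≤ r0) (hby : ∀ n, b ≤ ‖Plow R (V n) (y n)‖) :
    ∃ W w : Rd d → ℂ, Good g W w ∧ GSymmetric d w ∧ ¬ w =ᵐ[volume] (fun _ => (0:ℂ)) ∧
      A * NN g W ≤ LpN p w := by
  have hp0 : 0 < p := by linarith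
  have hc := Real.sqrt_pos.2 hg.c_pos
  obtain ⟨F, φ, hF, hφ, hweak⟩ := weak_compact (fun n => fS g (V n)) (fun n => (hV n).2.2.2) 1
    (fun n => (hN n).le)
  set W : Rd d → ℂ := fun ξ => (((√(g ‖ξ‖))⁻¹ : ℝ) : ℂ) * F ξ with hWdef
  have hsq : ∀ ξ : Rd d, (((√(g ‖ξ‖)) : ℝ) : ℂ) ≠ 0 := fun ξ => by
    have := Real.sqrt_pos.2 (sym_pos hg ξ)
    exact_mod_cast this.ne'
  have hfW : fS g W = F := by
    ext ξ
    simp only [fS, hWdef]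
    push_cast
    rw [← mul_assoc, mul_inv_cancel₀ (hsq ξ), one_mul]
  have hW : MemLp W 2 := inv_sqrt_memLp hg hF
  have hweakV : ∀ h : Rd d → ℂ, MemLp h 2 → Tendsto (fun n => ∫ x, V (φ n) x * h x) atTop
        (𝓝 (∫ x, W x * h x)) := by
    intro h hh
    have := hweak _ (inv_sqrt_memLp hg hh)
    have e1 : (∫ x, F x * ((((√(g ‖x‖))⁻¹ : ℝ) : ℂ) * h x)) = ∫ x, W x * h x := by
      congr with x; simp only [hWdef]; ring
    rw [e1] at this
    refine this.congr (fun n => ?_)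
    congr with x
    simp only [fS]
    push_cast
    rw [mul_mul_mul_comm, mul_comm (V (φ n) x), ← mul_assoc]
    field_simp [hsq x]
  have hVN : ∀ n, wN s (V n) ≤ ENNReal.ofReal (√c1)⁻¹ := by
    intro n
    have h1 := wN_le_fS hg (V n)
    have h2 : eLpNorm (fS g (V n)) 2 volume = 1 := by
      rw [← ENNReal.ofReal_toReal (hV n).2.2.2.2.ne]
      have := hN n
      unfold NN at this
      rw [this]; simp
    rwa [h2, mul_one] at h1
  have hWne : ¬ W =ᵐ[volume] (fun _ => (0:ℂ)) := by
    refine weak_ne_zero hR hb (M := (√c1)⁻¹) (fun n => (hV (φ n)).1) (fun n => ?_) hweakV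
      (fun n => hy (φ n)) (fun n => hby (φ n))
    exact ENNReal.toReal_le_of_le_ofReal (by positivity) ((L2_le_wN hg.s_pos.le _).trans (hVN _))
  obtain ⟨w0, hw0, hWw0, -⟩ := isFT_exists hW
  have hGW0 : Good g W w0 := ⟨hW, hw0, hWw0, by rw [hfW]; exact hF⟩
  have hwNW : wN s W ≠ ⊤ := by
    refine ((wN_le_fS hg W).trans_lt ?_).ne
    exact ENNReal.mul_lt_top ENNReal.ofReal_lt_top hGW0.2.2.2.2
  obtain ⟨ψ, hψ, hae⟩ := ae_conv hg.s_pos (M := ENNReal.ofReal (√c1)⁻¹ * (1 + eLpNorm F 2 volume))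
    (ENNReal.mul_ne_top ENNReal.ofReal_ne_top (ENNReal.add_ne_top.2 ⟨by simp, hF.2.ne⟩))
    (fun n => (hV (φ n)).1) (fun n => (hV (φ n)).2.1) (fun n => (hV (φ n)).2.2.1) hW hw0 hWw0
    (fun n => by
      refine (wN_le_fS hg _).trans ?_
      gcongr
      rw [fS_sub, hfW]
      refine (eLpNorm_sub_le (hV (φ n)).2.2.2.1 hF.1 (by norm_num)).trans ?_
      gcongr
      rw [← ENNReal.ofReal_toReal (hV (φ n)).2.2.2.2.ne]
      have := hN (φ n)
      unfold NN at this
      rw [this]; simp) hweakV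
  set w : Rd d → ℂ := fun x => limUnder atTop (fun n => v (φ (ψ n)) x) with hwdef
  have hww : w0 =ᵐ[volume] w := by
    filter_upwards [hae] with x hx
    exact hx.limUnder_eq.symm
  have hwsy : GSymmetric d w := by
    intro x z h1 h2
    simp only [hwdef]
    have : (fun n => v (φ (ψ n)) x) = fun n => v (φ (ψ n)) z := by
      ext n; exact hsy _ x z h1 h2
    rw [this]
  have hGW : Good g W w := by
    refine ⟨hW, (memLp_congr_ae hww).1 hw0, ?_, hGW0.2.2.2⟩
    intro θ
    rw [hWw0 θ]
    apply integral_congr_ae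
    filter_upwards [hww] with x hx
    rw [hx]
  have hwne : ¬ w =ᵐ[volume] (fun _ => (0:ℂ)) := by
    intro h0
    apply hWne
    have h1 := plancherel hW hGW.2.1 hGW.2.2.1
    rw [eLpNorm_congr_ae h0] at h1
    have h2 : eLpNorm W 2 volume = 0 := by rw [← h1]; simp
    exact (eLpNorm_eq_zero_iff hW.1 (by norm_num)).1 h2
  refine ⟨W, w, hGW, hwsy, hwne, ?_⟩
  set κ : ℕ → ℕ := fun n => φ (ψ n) with hκ
  have hκt : Tendsto κ atTop atTop := (hφ.comp hψ).tendsto_atTop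
  obtain ⟨K, -, HK⟩ := Good_sobolev hp hs hg (d := d)
  have hNsub : Tendsto (fun n => NN g (V (κ n) - W) ^ 2) atTop (𝓝 (1 - NN g W ^ 2)) := by
    have := L2_weak_sub (f := fun n => fS g (V (κ n))) (fun n => (hV _).2.2.2) hF
      (fun h hh => (hweak h hh).comp hψ.tendsto_atTop) (fun n => hN _)
    unfold NN
    simp_rw [fS_sub, hfW]
    exact this
  have hm1 : NN g W ^ 2 ≤ 1 := by
    have := ge_of_tendsto' hNsub (fun n => sq_nonneg _)
    linarith
  have hNN0 : ∀ U : Rd d → ℂ, 0 ≤ NN g U := fun U => ENNReal.toReal_nonneg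
  have hNsub2 : Tendsto (fun n => (A * NN g (V (κ n) - W)) ^ p) atTop (𝓝 ((A * √(1 - NN g W ^ 2)) ^ p)) := by
    have h1 := (hNsub.sqrt.const_mul A).rpow_const (p := p) (Or.inr hp0.le)
    refine h1.congr (fun n => ?_)
    rw [Real.sqrt_sq (hNN0 _)]
  have hBL := brezis_lieb hp (u := fun n => v (κ n)) (w := w) (fun n => (HK _ _ (hV _)).1) (HK _ _ hGW).1
    (by
      filter_upwards [hae, hww] with x hx hx2
      rw [← hx2]; exact hx)
    ((hlim.comp hκt).rpow_const (p := p) (Or.inr hp0.le))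
    (fun n => by
      apply Real.rpow_le_rpow ENNReal.toReal_nonneg _ hp0.le
      exact hAll _ _ (Good_sub (hV _) hGW) (GSymm_sub (hsy _) hwsy)) hNsub2
  have := final_real hp hA (sq_nonneg _) hm1 (ENNReal.toReal_nonneg) hBL
  rwa [Real.sqrt_sq (hNN0 _)] at this

lemma symB_of_adm {s γ c C : ℝ} (hs : 0 < s) (hγ : 1 < γ) (hc : 0 < c) (hcC : c ≤ C)
    {g : ℝ → ℝ → ℝ} (hg : IsAdmissible s γ c C g) {ε : ℝ} (hε : ε ∈ Set.Ioo (0:ℝ) 1) :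
    ∃ c1 C1, SymB s c1 C1 (g ε) := by
  obtain ⟨h1, h2, h3, h4⟩ := hg
  have hε0 := hε.1
  have hε1 := hε.2
  have hC : 0 < C := by linarith
  refine ⟨min (c * ε / 4 ^ s) (c / 2 ^ s), 2 * C, h1 ε hε, hs, by positivity, ?_, ?_⟩
  · intro r hr
    have hw : 0 < (1 + r^2) ^ s := by positivity
    by_cases hr1 : |r - 1| ≤ 1/2
    · have h := (h4 ε hε r hr1).1
      have hle : (1 + r^2) ^ s ≤ 4 ^ s := by
        apply Real.rpow_le_rpow (by positivity) _ hs.le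
        rw [abs_le] at hr1
        nlinarith
      have h0 : 0 ≤ |r-1| ^ γ := by positivity
      calc _ ≤ c * ε / 4 ^ s * (1 + r^2) ^ s := by gcongr; exact min_le_left _ _
        _ ≤ c * ε / 4 ^ s * 4 ^ s := by gcongr
        _ = c * ε := by field_simp
        _ ≤ c * (ε + |r-1| ^ γ) := by gcongr; linarith
        _ ≤ _ := h
    · push Not at hr1
      have h := (h3 ε hε r hr1.le).1
      rw [abs_of_nonneg hr] at h
      have hle : (1 + r^2) ^ s ≤ 2 ^ s * (1 + r ^ (2*s)) := by
        have e : r ^ (2*s) = (r^2)^s := by rw [Real.rpow_mul hr]; norm_num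
        rw [e]
        have hm : 1 + r^2 ≤ 2 * max 1 (r^2) := by
          have := le_max_left 1 (r^2); have := le_max_right 1 (r^2); linarith
        calc (1 + r^2)^s ≤ (2 * max 1 (r^2))^s := by gcongr
          _ = 2^s * (max 1 (r^2))^s := Real.mul_rpow (by norm_num) (by positivity)
          _ ≤ _ := by
            gcongr
            rcases max_choice 1 (r^2) with h | h
            · rw [h, Real.one_rpow]; have : 0 ≤ (r^2)^s := by positivity
              linarith
            · rw [h]; linarith
      calc _ ≤ c / 2 ^ s * (1 + r^2) ^ s := by gcongr; exact min_le_right _ _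
        _ ≤ c / 2 ^ s * (2 ^ s * (1 + r ^ (2*s))) := by gcongr
        _ = c * (1 + r ^ (2*s)) := by field_simp
        _ ≤ _ := h
  · intro r hr
    have hw : 1 ≤ (1 + r^2) ^ s := Real.one_le_rpow (by nlinarith) hs.le
    by_cases hr1 : |r - 1| ≤ 1/2
    · have h := (h4 ε hε r hr1).2
      have h0 : |r-1| ^ γ ≤ 1 := Real.rpow_le_one (abs_nonneg _) (by linarith) (by linarith)
      calc _ ≤ _ := h
        _ ≤ C * 2 := by gcongr; linarith
        _ ≤ _ := by nlinarith
    · push Not at hr1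
      have h := (h3 ε hε r hr1.le).2
      rw [abs_of_nonneg hr] at h
      have e : r ^ (2*s) = (r^2)^s := by rw [Real.rpow_mul hr]; norm_num
      have hle : r ^ (2*s) ≤ (1 + r^2)^s := by
        rw [e]; gcongr; linarith
      calc _ ≤ _ := h
        _ ≤ C * ((1 + r^2)^s + (1 + r^2)^s) := by gcongr
        _ = _ := by ring

lemma exists_good {d : ℕ} {s c1 C1 : ℝ} {g : ℝ → ℝ} (hg : SymB s c1 C1 g) :
    ∃ U u : Rd d → ℂ, Good g U u ∧ GSymmetric d u ∧ ¬ u =ᵐ[volume] (fun _ => (0:ℂ)) := by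
  have h1 : (0:ℝ) < 1 := one_pos
  set U : Rd d → ℂ := ⇑(chiS (d := d) h1) with hUdef
  have hU : MemLp U 2 := (chiS (d := d) h1).memLp 2 volume
  have hUi : Integrable U := (chiS (d := d) h1).integrable
  have hu : MemLp (𝓕⁻ U) 2 := memLp_fourierInv hUi hU
  have hft : IsFT U (𝓕⁻ U) := isFT_fourierInv hUi
  have hUz : ∀ ξ : Rd d, 2 ≤ ‖ξ‖ → U ξ = 0 := by
    intro ξ h
    rw [hUdef, chiS_apply, chiR_eq_zero h1 (by linarith)]; simp
  refine ⟨U, 𝓕⁻ U, ⟨hU, hu, hft, ?_⟩, ?_, ?_⟩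
  · refine (hU.const_mul ((√(|C1| * 5 ^ s) : ℝ) : ℂ)).of_le
      ((sqrtg_meas hg.meas).aestronglyMeasurable.mul hU.1) ?_
    filter_upwards with ξ
    rw [fS_norm, norm_mul, Complex.norm_real, Real.norm_of_nonneg (Real.sqrt_nonneg _)]
    by_cases h : 2 ≤ ‖ξ‖
    · rw [hUz ξ h]; simp
    · push Not at h
      gcongr
      refine (hg.hi _ (norm_nonneg ξ)).trans ?_
      have hs := hg.s_pos
      gcongr
      · exact le_abs_self C1
      · nlinarith [norm_nonneg ξ]
  · have hd0 : ∀ x y : Rd d, ‖x‖ = ‖y‖ → 𝓕⁻ U x = 𝓕⁻ U y := by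
      intro x y hxy
      set A : Rd d ≃ₗᵢ[ℝ] Rd d := Submodule.reflection (ℝ ∙ (x - y))ᗮ
      have hA : A x = y := Submodule.reflection_sub hxy
      rw [← hA, ← Real.fourierInv_comp_linearIsometry]
      have hUA : U ∘ A = U := by
        ext ξ
        simp [hUdef, chiS_apply, chiR]
      rw [hUA]
    intro x y hb hl
    rcases Nat.eq_zero_or_pos d with rfl | hd
    · congr 1
    apply hd0
    rw [blockSq_eq hd, blockSq_eq hd] at hb
    rw [hl ⟨d-1, by omega⟩ rfl] at hb
    rw [← pow_left_inj₀ (norm_nonneg _) (norm_nonneg _) two_ne_zero]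
    linarith
  · intro h0
    have h2 := plancherel hU hu hft
    rw [eLpNorm_congr_ae h0] at h2
    have h3 : eLpNorm U 2 volume = 0 := by rw [← h2]; simp
    have h4 := (eLpNorm_eq_zero_iff hU.1 (by norm_num)).1 h3
    have hc : Continuous U := (chiS (d := d) h1).continuous
    have h5 : U = fun _ => (0:ℂ) := (Continuous.ae_eq_iff_eq volume hc continuous_const).1 h4
    have h6 : U 0 = (0:ℂ) := congrFun h5 0
    simp only [hUdef, chiS_apply] at h6
    rw [chiR_eq_one h1 (by simp)] at h6
    simp at h6

lemma exponent {d : ℕ} (hd : 3 ≤ d) {s p : ℝ} (hp : 2 < p)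
    (hps : s < (d : ℝ) / 2 → p < 2 * (d : ℝ) / ((d : ℝ) - 2 * s)) : d * (1/2 - 1/p) < s := by
  have hd0 : (0:ℝ) < d := by exact_mod_cast (by omega : 0 < d)
  have hp0 : 0 < p := by linarith
  have e : (d:ℝ) * (1/2 - 1/p) = d/2 - d/p := by ring
  rw [e]
  have h2 : 0 < (d:ℝ)/p := by positivity
  rcases lt_or_ge s ((d:ℝ)/2) with h | h
  · have h1 := hps h
    rw [lt_div_iff₀ (by linarith)] at h1
    have h3 : ((d:ℝ) - 2*s)/2 < d/p := by
      rw [lt_div_iff₀ hp0]; linarith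
    linarith
  · linarith

lemma attained_main {d : ℕ} (hd : 3 ≤ d) {p s c1 C1 : ℝ} (hp : 2 < p)
    (hs : d * (1/2 - 1/p) < s) {g : ℝ → ℝ} (hg : SymB s c1 C1 g) :
    Attained d s p g (GSymmetric d) := by
  have hp0 : 0 < p := by linarith
  obtain ⟨K, hK, HK⟩ := Good_sobolev hp hs hg (d := d)
  have hNN0 : ∀ U : Rd d → ℂ, 0 ≤ NN g U := fun U => ENNReal.toReal_nonneg
  have hL0 : ∀ u : Rd d → ℂ, 0 ≤ LpN p u := fun u => ENNReal.toReal_nonneg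
  have hq : ∀ u : HsFn d s, qeps g u = NN g u.ft ^ 2 := fun u =>
    (NN_sq hg (Good_of_Hs hg u)).symm
  have hLpos : ∀ U u : Rd d → ℂ, Good g U u → ¬ u =ᵐ[volume] (fun _ => (0:ℂ)) → 0 < LpN p u := by
    intro U u h hne
    have hm := (HK U u h).1
    refine lt_of_le_of_ne (hL0 u) (fun h0 => hne ?_)
    have h1 : eLpNorm u (ENNReal.ofReal p) volume = 0 := by
      rcases (ENNReal.toReal_eq_zero_iff _).1 h0.symm with h2 | h2
      · exact h2
      · exact absurd h2 hm.2.ne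
    exact (eLpNorm_eq_zero_iff hm.1 (by simpa using hp0)).1 h1
  -- elements of the Rayleigh set
  have hmemS : ∀ U u : Rd d → ℂ, Good g U u → GSymmetric d u → ¬ u =ᵐ[volume] (fun _ => (0:ℂ)) →
      NN g U ^ 2 / LpN p u ^ 2 ∈ RayleighSet d s p g (GSymmetric d) := by
    intro U u h hsy hne
    exact ⟨mkHs hg h, hsy, hne, (HK U u h).1, by rw [hq]; rfl⟩
  have hofS : ∀ t ∈ RayleighSet d s p g (GSymmetric d), ∃ U u : Rd d → ℂ, Good g U u ∧
      GSymmetric d u ∧ 0 < LpN p u ∧ t = NN g U ^ 2 / LpN p u ^ 2 := by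
    rintro t ⟨u, hsy, hne, -, rfl⟩
    exact ⟨u.ft, u.toFun, Good_of_Hs hg u, hsy, hLpos _ _ (Good_of_Hs hg u) hne, by rw [hq]⟩
  have hlow : ∀ t ∈ RayleighSet d s p g (GSymmetric d), (1/K)^2 ≤ t := by
    intro t ht
    obtain ⟨U, u, h, hsy, hpos, rfl⟩ := hofS t ht
    have := (HK U u h).2
    rw [← div_pow]
    apply pow_le_pow_left₀ (by positivity)
    rw [div_le_div_iff₀ hK hpos]
    linarith
  have hbdd : BddBelow (RayleighSet d s p g (GSymmetric d)) := ⟨(1/K)^2, hlow⟩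
  obtain ⟨U0, u0, hG0, hsy0, hne0⟩ := exists_good hg (d := d)
  have hnon : (RayleighSet d s p g (GSymmetric d)).Nonempty := ⟨_, hmemS U0 u0 hG0 hsy0 hne0⟩
  set L := sInf (RayleighSet d s p g (GSymmetric d)) with hLdef
  have hLpos' : 0 < L := lt_of_lt_of_le (by positivity) (le_csInf hnon hlow)
  set A := (√L)⁻¹ with hAdef
  have hsL : 0 < √L := Real.sqrt_pos.2 hLpos'
  have hA : 0 < A := inv_pos.2 hsL
  have hAll : ∀ U u : Rd d → ℂ, Good g U u → GSymmetric d u → LpN p u ≤ A * NN g U := by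
    intro U u h hsy
    by_cases hne : u =ᵐ[volume] (fun _ => (0:ℂ))
    · have : LpN p u = 0 := by
        unfold LpN
        rw [eLpNorm_congr_ae hne]; simp
      rw [this]
      exact mul_nonneg hA.le (hNN0 U)
    · have hpos := hLpos U u h hne
      have h1 : L ≤ NN g U ^ 2 / LpN p u ^ 2 := csInf_le hbdd (hmemS U u h hsy hne)
      rw [← div_pow] at h1
      have h2 := Real.sqrt_le_sqrt h1
      rw [Real.sqrt_sq (div_nonneg (hNN0 U) hpos.le), le_div_iff₀ hpos] at h2
      rw [hAdef, inv_mul_eq_div, le_div_iff₀ hsL]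
      linarith
  obtain ⟨t, -, htlim, htS⟩ := exists_seq_tendsto_sInf hnon hbdd
  have htpos : ∀ n, 0 < t n := fun n => lt_of_lt_of_le (by positivity) (hlow _ (htS n))
  -- normalised sequence
  have hnorm : ∀ n, ∃ U u : Rd d → ℂ, Good g U u ∧ GSymmetric d u ∧ NN g U = 1 ∧
      LpN p u = (√(t n))⁻¹ := by
    intro n
    obtain ⟨U, u, h, hsy, hpos, ht⟩ := hofS _ (htS n)
    have hNpos : 0 < NN g U := by
      refine lt_of_le_of_ne (hNN0 U) (fun h0 => ?_)
      have := htpos n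
      rw [ht, ← h0] at this
      simp at this
    have hna : ‖(((NN g U)⁻¹ : ℝ) : ℂ)‖ = (NN g U)⁻¹ := by
      rw [Complex.norm_real, Real.norm_of_nonneg (by positivity)]
    refine ⟨_, _, Good_smul h (((NN g U)⁻¹ : ℝ) : ℂ), GSymm_smul hsy _, ?_, ?_⟩
    · rw [NN_smul, hna, inv_mul_cancel₀ hNpos.ne']
    · rw [LpN_smul, hna, ht, ← div_pow, Real.sqrt_sq (by positivity)]
      field_simp
  obtain ⟨T, hT⟩ := htlim.bddAbove_range
  have hT' : ∀ n, t n ≤ T := fun n => hT ⟨n, rfl⟩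
  have hTpos : 0 < T := lt_of_lt_of_le (htpos 0) (hT' 0)
  obtain ⟨R, hR, b, hb, r0, hcon⟩ := concentrate hd hp hs (a := (√T)⁻¹)
    (inv_pos.2 (Real.sqrt_pos.2 hTpos)) (M := (√c1)⁻¹) (by positivity)
  have hseq : ∀ n, ∃ (V v : Rd d → ℂ) (y : Rd d), Good g V v ∧ GSymmetric d v ∧ NN g V = 1 ∧
      LpN p v = (√(t n))⁻¹ ∧ ‖y‖ ≤ r0 ∧ b ≤ ‖Plow R V y‖ := by
    intro n
    obtain ⟨U, u, h, hsy, hN, hLp⟩ := hnorm n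
    have hw : wN s U ≤ ENNReal.ofReal (√c1)⁻¹ := by
      have h1 := wN_le_fS hg U
      have h2 : eLpNorm (fS g U) 2 volume = 1 := by
        rw [← ENNReal.ofReal_toReal h.2.2.2.2.ne]
        unfold NN at hN
        rw [hN]; simp
      rwa [h2, mul_one] at h1
    have hlo : ENNReal.ofReal (√T)⁻¹ ≤ eLpNorm u (ENNReal.ofReal p) volume := by
      rw [← ENNReal.ofReal_toReal (HK U u h).1.2.ne]
      apply ENNReal.ofReal_le_ofReal
      unfold LpN at hLp
      rw [hLp]
      exact inv_anti₀ (Real.sqrt_pos.2 (htpos n)) (Real.sqrt_le_sqrt (hT' n))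
    obtain ⟨τ, y, hy, hby⟩ := hcon U u h.1 h.2.1 h.2.2.1 hsy hw hlo
    refine ⟨_, _, y, Good_translate h (lastV hd τ), GSymm_translate hd hsy τ, ?_, ?_, hy, hby⟩
    · rw [NN_translate, hN]
    · rw [LpN_translate p h.2.1.1, hLp]
  choose V v y h1 h2 h3 h4 h5 h6 using hseq
  have hlim : Tendsto (fun n => LpN p (v n)) atTop (𝓝 A) := by
    simp_rw [h4]
    exact htlim.sqrt.inv₀ hsL.ne'
  obtain ⟨W, w, hGW, hwsy, hwne, hfin⟩ := core hp hs hg hA hR hb hAll h1 h2 h3 hlim h5 h6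
  refine ⟨mkHs hg hGW, hwsy, hwne, (HK W w hGW).1, ?_⟩
  have hpos := hLpos W w hGW hwne
  have e : qeps g (mkHs hg hGW) / LpN p (mkHs hg hGW).toFun ^ 2 = NN g W ^ 2 / LpN p w ^ 2 := by
    rw [hq]; rfl
  rw [e]
  apply le_antisymm
  · change _ ≤ L
    rw [hAdef, inv_mul_eq_div, div_le_iff₀ hsL] at hfin
    rw [div_le_iff₀ (by positivity)]
    calc NN g W ^ 2 ≤ (LpN p w * √L)^2 := pow_le_pow_left₀ (hNN0 W) hfin 2
      _ = L * LpN p w ^ 2 := by rw [mul_pow, Real.sq_sqrt hLpos'.le]; ring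
  · exact csInf_le hbdd (hmemS W w hGW hwsy hwne)

/-- Theorem C.2: existence of a minimizer for the Rayleigh quotient
restricted to `H^s_G`, `G = O(d-1) × {1}`, for `d ≥ 3` and fixed `ε ∈ (0,1)`. -/
theorem stmt15 (d : ℕ) (hd : 3 ≤ d)
    (s γ p c C : ℝ)
    (hs : (d : ℝ) / ((d : ℝ) + 1) < s) (hγ : 1 < γ)
    (hp : 2 < p) (hps : s < (d : ℝ) / 2 → p < 2 * (d : ℝ) / ((d : ℝ) - 2 * s))
    (hc : 0 < c) (hcC : c ≤ C)
    (g : ℝ → ℝ → ℝ) (hg : IsAdmissible s γ c C g)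
    (ε : ℝ) (hε : ε ∈ Set.Ioo (0:ℝ) 1) :
    Attained d s p (g ε) (GSymmetric d) := by
  have hs0 : 0 < s := lt_of_le_of_lt (by positivity) hs
  obtain ⟨c1, C1, hB⟩ := symB_of_adm hs0 hγ hc hcC hg hε
  exact attained_main hd hp (exponent hd hp hps) hB
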